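/- For every nonnegative integer n, the number of partitions of 5n+3 without repeated odd parts whose M₂-rank is congruent to 0 modulo 5 equals the number of partitions of 5n+3 without repeated odd parts whose M₂-rank is congruent to 2 modulo 5; that is, N₂(0,5,5n+3) = N₂(2,5,5n+3). -/

import Mathlib

/-- The infinite q-Pochhammer symbol `(a; q)_∞ = ∏_{k ≥ 0} (1 - a qᵏ)`. -/
noncomputable def qPoch (a q : ℂ) : ℂ := ∏' k : ℕ, (1 - a * q ^ k)

/-- A partition has no repeated odd parts: each odd number occurs at most once as a part. -/
def Nat.Partition.noRepeatedOdd {n : ℕ} (p : n.Partition) : Prop :=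
  ∀ i, Odd i → p.parts.count i ≤ 1

/-- The M₂-rank of a partition: ⌈(largest part)/2⌉ minus the number of parts. -/
def Nat.Partition.m2Rank {n : ℕ} (p : n.Partition) : ℤ :=
  (((p.parts.sup + 1) / 2 : ℕ) : ℤ) - (Multiset.card p.parts : ℤ)

/-- `N2 s ℓ n` is the number of partitions of `n` without repeated odd parts whose
M₂-rank is congruent to `s` modulo `ℓ`. -/
noncomputable def N2 (s ℓ n : ℕ) : ℕ :=
  Nat.card {p : n.Partition // p.noRepeatedOdd ∧ p.m2Rank ≡ (s : ℤ) [ZMOD (ℓ : ℤ)]}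

/-!
Let `D(q) = ∑ (N₂(0,5,n) - N₂(2,5,n)) qⁿ`; all series converge absolutely for `0 < |q| < 1/2`.

Take the largest part off a partition without repeated odd parts and of M₂-rank at least `r`, pad
the remaining parts with zeros to a number that the largest part dictates, add `2` to each of them,
and adjoin a part `1` according to the parity of the largest part. The result is an arbitrary
partition of rank at most `r + 1`, of size smaller by `2r + 1`. Hence the generating function `R_r`
of the partitions of rank at least `r` obeys `R_r = q^(2r+1) (P - R_{r+2})`, where `P` counts all
partitions without repeated odd parts. Iterating at `q = -Q` expresses `R_r / P` by partial theta
series and gives `P(-Q) ψ(Q) = 1`. Summing over the ranks modulo 5,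
`ψ(Q) D(-Q) = 1 + ∑_{i ≠ 0} Q^(i(2i-1)) (2 Q^(2i) + Q^(4i)) / (1 - Q^(10i))`.

Splitting the summation indices modulo 5 writes `ψ(Q)` and the right-hand side as combinations of
powers of `Q` whose coefficients are theta values and Appell–Lerch sums in base `Y⁵`, `Y = Q⁵`.
The product of a theta function with an Appell–Lerch sum is determined, up to a multiple of a theta
function, by the recurrence of its Laurent coefficients; eliminating the Appell–Lerch sums between
such products gives the three-term theta relation and a relation between logarithmic derivatives.
They show that the right-hand side is `ψ(Q) (E₀ + Q E₁ + Q² E₂ + Q⁴ E₄)` with explicit functions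
`E_k` of `Y`. The term `Q³ E₃` is missing, so the coefficients of `D` at exponents `≡ 3 (mod 5)`
vanish.
-/

namespace M2Rank

/-! ### Trading the largest part -/

section Bijection

open Multiset

/-- The M₂-rank of a multiset of natural numbers; on the parts of a partition it is
`Nat.Partition.m2Rank`. -/
def rank (s : Multiset ℕ) : ℤ := (((s.sup + 1) / 2 : ℕ) : ℤ) - (card s : ℤ)

/-- Multisets in which no odd number is repeated. -/
def NoRepeatedOdd (s : Multiset ℕ) : Prop := ∀ i, Odd i → s.count i ≤ 1

/-- Partitions without repeated odd parts, encoded by their multisets of (positive) parts. -/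
def oddDistinctPartitions : Set (Multiset ℕ) := {s | 0 ∉ s ∧ NoRepeatedOdd s}

/-- Partitions without repeated odd parts of rank at least `r`. For `r ≥ 0` the empty partition, of
rank `0`, is excluded because it has no largest part to be removed. -/
def rankGE (r : ℤ) : Set (Multiset ℕ) :=
  {s | s ∈ oddDistinctPartitions ∧ r ≤ rank s ∧ (0 ≤ r → s ≠ 0)}

/-- Partitions without repeated odd parts of rank at most `r`. -/
def rankLE (r : ℤ) : Set (Multiset ℕ) := {s | s ∈ oddDistinctPartitions ∧ rank s ≤ r}

/-- The common intermediate set of the bijection between `rankGE r` and `rankLE (r + 1)`: pairs of a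
top part `l` and a multiset of further parts, padded with zeros to have cardinality
`⌈l / 2⌉ - r - 1`. -/
def paddedPairs (r : ℤ) : Set (ℕ × Multiset ℕ) :=
  {x | (((x.1 + 1) / 2 : ℕ) : ℤ) = card x.2 + r + 1 ∧ (∀ y ∈ x.2, y ≤ x.1) ∧
    NoRepeatedOdd (x.1 ::ₘ x.2)}

/-- The partition formed by the top part and the further parts of a padded pair. -/
def insertTop (x : ℕ × Multiset ℕ) : Multiset ℕ := (x.1 ::ₘ x.2).filter (· ≠ 0)

/-- The inverse of `insertTop`: the largest part is split off, and zeros are added up to the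
cardinality prescribed by `paddedPairs r`. -/
def splitTop (r : ℤ) (s : Multiset ℕ) : ℕ × Multiset ℕ :=
  (s.sup, s.erase s.sup + replicate
    ((((s.sup + 1) / 2 : ℕ) : ℤ) - r - 1 - card (s.erase s.sup)).toNat 0)

/-- The partition obtained from a padded pair by dropping the top part, raising every further part
by `2`, and recording the parity of the top part by the presence of a part `1`. -/
def raiseParts (x : ℕ × Multiset ℕ) : Multiset ℕ :=
  x.2.map (· + 2) + if Even x.1 then {1} else 0

/-- The inverse of `raiseParts`: the presence of a part `1` and the number of other parts determine
the top part. -/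
def lowerParts (r : ℤ) (s : Multiset ℕ) : ℕ × Multiset ℕ :=
  ((2 * (card (s.erase 1) + r + 1) - if 1 ∈ s then 0 else 1).toNat, (s.erase 1).map (· - 2))

lemma NoRepeatedOdd.mono {s t : Multiset ℕ} (h : s ≤ t) (ht : NoRepeatedOdd t) :
    NoRepeatedOdd s :=
  fun i hi => (count_le_of_le i h).trans (ht i hi)

lemma sup_mem_of_ne_zero {s : Multiset ℕ} (h : s ≠ 0) : s.sup ∈ s := by
  induction s using Multiset.induction with
  | empty => exact absurd rfl h
  | cons a s ih =>
    rw [sup_cons]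
    rcases eq_or_ne s 0 with rfl | hs
    · simp
    · rcases le_total a s.sup with h' | h'
      · rw [sup_eq_right.2 h']
        exact mem_cons_of_mem (ih hs)
      · rw [sup_eq_left.2 h']
        exact mem_cons_self _ _

lemma filter_ne_add_replicate_count (s : Multiset ℕ) (a : ℕ) :
    s.filter (· ≠ a) + replicate (s.count a) a = s := by
  conv_rhs => rw [← filter_add_not (· ≠ a) s]
  rw [← filter_eq']
  congr 1
  exact filter_congr (by simp)

lemma card_filter_ne_add_count (s : Multiset ℕ) (a : ℕ) :
    card (s.filter (· ≠ a)) + s.count a = card s := by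
  conv_rhs => rw [← filter_ne_add_replicate_count s a]
  simp

section InsertTop

variable {r : ℤ} {x : ℕ × Multiset ℕ}

lemma sup_insertTop (hx : x ∈ paddedPairs r) : (insertTop x).sup = x.1 := by
  obtain ⟨l, ν⟩ := x
  refine le_antisymm (Multiset.sup_le.2 fun b hb => ?_) ?_
  · rcases mem_cons.1 (mem_of_mem_filter hb) with rfl | hb
    · rfl
    · exact hx.2.1 b hb
  · rcases Nat.eq_zero_or_pos l with rfl | hl
    · exact Nat.zero_le _
    · exact le_sup (mem_filter.2 ⟨mem_cons_self _ _, hl.ne'⟩)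

lemma erase_insertTop (hx : x ∈ paddedPairs r) :
    (insertTop x).erase x.1 = x.2.filter (· ≠ 0) := by
  obtain ⟨l, ν⟩ := x
  rcases Nat.eq_zero_or_pos l with rfl | hl
  · have hν : ν.filter (· ≠ 0) = 0 := filter_eq_nil.2 fun a ha => by simpa using hx.2.1 a ha
    simp only [insertTop]
    rw [filter_cons_of_neg _ (by simp), hν, erase_zero]
  · simp only [insertTop]
    rw [filter_cons_of_pos (p := (· ≠ 0)) _ hl.ne', erase_cons_head]

lemma le_rank_insertTop (hx : x ∈ paddedPairs r) : r ≤ rank (insertTop x) := by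
  have hcard : (((x.1 + 1) / 2 : ℕ) : ℤ) = card x.2 + r + 1 := hx.1
  have hle : card (insertTop x) ≤ card x.2 + 1 := by
    simpa [insertTop] using card_le_card (filter_le (· ≠ 0) (x.1 ::ₘ x.2))
  rw [rank, sup_insertTop hx]
  omega

lemma mapsTo_insertTop (r : ℤ) : Set.MapsTo insertTop (paddedPairs r) (rankGE r) := by
  intro x hx
  refine ⟨⟨by simp [insertTop], hx.2.2.mono (filter_le _ _)⟩, le_rank_insertTop hx, ?_⟩
  intro hr h0
  have hsup := sup_insertTop hx
  have hcard : (((x.1 + 1) / 2 : ℕ) : ℤ) = card x.2 + r + 1 := hx.1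
  rw [h0, sup_zero] at hsup
  rw [← hsup] at hcard
  simp only [Nat.bot_eq_zero, zero_add, Nat.reduceDiv, CharP.cast_eq_zero] at hcard
  omega

lemma card_erase_sup_le {s : Multiset ℕ} (hs : s ∈ rankGE r) :
    (card (s.erase s.sup) : ℤ) ≤ (((s.sup + 1) / 2 : ℕ) : ℤ) - r - 1 := by
  obtain ⟨-, hr, hne⟩ := hs
  rw [rank] at hr
  rcases eq_or_ne s 0 with rfl | h0
  · have hneg : ¬ 0 ≤ r := fun h => hne h rfl
    simp only [erase_zero, card_zero, sup_zero, Nat.bot_eq_zero]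
    omega
  · have hpos := card_pos.2 h0
    rw [card_erase_of_mem (sup_mem_of_ne_zero h0), Nat.pred_eq_sub_one]
    omega

lemma mapsTo_splitTop (r : ℤ) : Set.MapsTo (splitTop r) (rankGE r) (paddedPairs r) := by
  intro s hs
  have hcard := card_erase_sup_le hs
  refine ⟨?_, fun y hy => ?_, fun i hi => ?_⟩
  · simp only [splitTop, card_add, card_replicate]
    omega
  · rcases mem_add.1 hy with hy | hy
    · exact le_sup (mem_of_mem_erase hy)
    · exact (eq_of_mem_replicate hy).trans_le (Nat.zero_le _)
  · have hi0 : 0 ≠ i := hi.pos.ne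
    simp only [splitTop]
    rw [← cons_add, count_add, count_replicate, if_neg hi0, add_zero]
    rcases eq_or_ne s 0 with rfl | h0
    · simp [hi0.symm]
    · rw [cons_erase (sup_mem_of_ne_zero h0)]
      exact hs.1.2 i hi

lemma splitTop_insertTop (hx : x ∈ paddedPairs r) : splitTop r (insertTop x) = x := by
  have hcard := card_filter_ne_add_count x.2 0
  have h1 := hx.1
  rw [splitTop, sup_insertTop hx, erase_insertTop hx]
  refine Prod.ext rfl ?_
  conv_rhs => rw [← filter_ne_add_replicate_count x.2 0]
  simp only
  congr 2
  omega

lemma insertTop_splitTop {s : Multiset ℕ} (hs : s ∈ rankGE r) : insertTop (splitTop r s) = s := by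
  have hpad (n : ℕ) : (replicate n 0).filter (· ≠ 0) = 0 :=
    filter_eq_nil.2 fun a ha => by simpa using eq_of_mem_replicate ha
  simp only [insertTop, splitTop]
  rw [← cons_add, filter_add, hpad, add_zero]
  rcases eq_or_ne s 0 with rfl | h0
  · rfl
  · rw [cons_erase (sup_mem_of_ne_zero h0), filter_eq_self]
    rintro a ha rfl
    exact hs.1.1 ha

lemma bijOn_insertTop (r : ℤ) : Set.BijOn insertTop (paddedPairs r) (rankGE r) :=
  Set.InvOn.bijOn (f' := splitTop r) ⟨fun _ => splitTop_insertTop, fun _ => insertTop_splitTop⟩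
    (mapsTo_insertTop r) (mapsTo_splitTop r)

end InsertTop

section RaiseParts

variable {r : ℤ}

lemma odd_add_two {i : ℕ} : Odd (i + 2) ↔ Odd i := by
  simp [Nat.odd_add]

lemma count_map_add_two (s : Multiset ℕ) (i : ℕ) : (s.map (· + 2)).count (i + 2) = s.count i :=
  count_map_eq_count' _ _ (add_left_injective 2) i

lemma map_add_two_map_sub_two {s : Multiset ℕ} (h : ∀ x ∈ s, 2 ≤ x) :
    (s.map (· - 2)).map (· + 2) = s := by
  rw [map_map]
  conv_rhs => rw [← map_id s]
  exact map_congr rfl fun x hx => Nat.sub_add_cancel (h x hx)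

lemma erase_one_raiseParts (x : ℕ × Multiset ℕ) : (raiseParts x).erase 1 = x.2.map (· + 2) := by
  have h1 : 1 ∉ x.2.map (· + 2) := by simp
  rw [raiseParts]
  split_ifs
  · rw [erase_add_right_neg _ h1]
    simp
  · rw [add_zero, erase_of_notMem h1]

lemma one_mem_raiseParts (x : ℕ × Multiset ℕ) : 1 ∈ raiseParts x ↔ Even x.1 := by
  rw [raiseParts]
  split_ifs with h <;> simp [h]

lemma noRepeatedOdd_raiseParts {x : ℕ × Multiset ℕ} (hx : NoRepeatedOdd x.2) :
    NoRepeatedOdd (raiseParts x) := by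
  intro i hi
  match i, hi with
  | 1, _ =>
    have h1 : (x.2.map (· + 2)).count 1 = 0 := count_eq_zero_of_notMem (by simp)
    rw [raiseParts, count_add, h1]
    split_ifs <;> simp
  | i + 2, hi =>
    have hsmall : (if Even x.1 then {1} else 0 : Multiset ℕ).count (i + 2) = 0 := by
      split_ifs <;> simp
    rw [raiseParts, count_add, count_map_add_two, hsmall, add_zero]
    exact hx i (odd_add_two.1 hi)

lemma lt_top_of_odd {x : ℕ × Multiset ℕ} (hx : x ∈ paddedPairs r) (hodd : Odd x.1) {a : ℕ}
    (ha : a ∈ x.2) : a < x.1 := by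
  refine lt_of_le_of_ne (hx.2.1 a ha) ?_
  rintro rfl
  have hcount := hx.2.2 _ hodd
  rw [count_cons_self] at hcount
  have := count_pos.2 ha
  omega

lemma rank_raiseParts_le {x : ℕ × Multiset ℕ} (hx : x ∈ paddedPairs r) :
    rank (raiseParts x) ≤ r + 1 := by
  have hcard : (((x.1 + 1) / 2 : ℕ) : ℤ) = card x.2 + r + 1 := hx.1
  rw [rank]
  rcases Nat.even_or_odd x.1 with hx1 | hx1
  · have hsup : (raiseParts x).sup ≤ x.1 + 2 := by
      refine Multiset.sup_le.2 fun b hb => ?_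
      simp only [raiseParts, hx1, if_true, mem_add, mem_map, mem_singleton] at hb
      rcases hb with ⟨a, ha, rfl⟩ | rfl
      · exact Nat.add_le_add_right (hx.2.1 a ha) 2
      · omega
    have hc : card (raiseParts x) = card x.2 + 1 := by simp [raiseParts, hx1]
    omega
  · have hsup : (raiseParts x).sup ≤ x.1 + 1 := by
      refine Multiset.sup_le.2 fun b hb => ?_
      simp only [raiseParts, Nat.not_even_iff_odd.2 hx1, if_false, add_zero, mem_map] at hb
      obtain ⟨a, ha, rfl⟩ := hb
      have := lt_top_of_odd hx hx1 ha
      omega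
    have hc : card (raiseParts x) = card x.2 := by simp [raiseParts, Nat.not_even_iff_odd.2 hx1]
    obtain ⟨k, hk⟩ := hx1
    omega

lemma mapsTo_raiseParts (r : ℤ) : Set.MapsTo raiseParts (paddedPairs r) (rankLE (r + 1)) := by
  intro x hx
  refine ⟨⟨?_, noRepeatedOdd_raiseParts (hx.2.2.mono (le_cons_self _ _))⟩, rank_raiseParts_le hx⟩
  rw [raiseParts]
  split_ifs <;> simp

lemma two_le_of_mem_erase_one {s : Multiset ℕ} (hs : s ∈ oddDistinctPartitions) :
    ∀ x ∈ s.erase 1, 2 ≤ x := by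
  intro x hx
  have h0 : x ≠ 0 := by
    rintro rfl
    exact hs.1 (mem_of_mem_erase hx)
  have h1 : x ≠ 1 := by
    rintro rfl
    have hpos := count_pos.2 hx
    rw [count_erase_self] at hpos
    have := hs.2 1 odd_one
    omega
  omega

/- For `r = -1` the empty partition, of rank `0`, would get the top part
`2 (card s + r + 1) - 1 = -1`. -/
lemma one_le_card_add_of_mem_rankLE (hr : r ≠ -1) {s : Multiset ℕ} (hs : s ∈ rankLE (r + 1)) :
    1 ≤ (card s : ℤ) + r + 1 := by
  obtain ⟨⟨hs0, -⟩, hrank⟩ := hs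
  rw [rank] at hrank
  rcases eq_or_ne s 0 with rfl | h0
  · simp only [sup_zero, Nat.bot_eq_zero, zero_add, Nat.reduceDiv, CharP.cast_eq_zero, card_zero,
      sub_self, le_add_iff_nonneg_left] at hrank ⊢
    omega
  · have : s.sup ≠ 0 := fun h => hs0 (h ▸ sup_mem_of_ne_zero h0)
    omega

lemma even_lowerParts_fst (hr : r ≠ -1) {s : Multiset ℕ} (hs : s ∈ rankLE (r + 1)) :
    Even (lowerParts r s).1 ↔ 1 ∈ s := by
  simp only [lowerParts]
  rw [Nat.even_iff]
  split_ifs with h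
  · simp only [h, iff_true]
    omega
  · have := one_le_card_add_of_mem_rankLE hr hs
    rw [erase_of_notMem h]
    simp only [h, iff_false]
    omega

lemma half_lowerParts_fst (hr : r ≠ -1) {s : Multiset ℕ} (hs : s ∈ rankLE (r + 1)) :
    ((((lowerParts r s).1 + 1) / 2 : ℕ) : ℤ) = card (lowerParts r s).2 + r + 1 := by
  have hrank := hs.2
  rw [rank] at hrank
  simp only [lowerParts, card_map]
  split_ifs with h
  · have hcard := card_erase_of_mem h
    have hpos := card_pos_iff_exists_mem.2 ⟨1, h⟩
    have hsup : 1 ≤ s.sup := le_sup h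
    rw [Nat.pred_eq_sub_one] at hcard
    omega
  · have := one_le_card_add_of_mem_rankLE hr hs
    rw [erase_of_notMem h]
    omega

lemma le_lowerParts_fst {s : Multiset ℕ} (hs : s ∈ rankLE (r + 1)) {y : ℕ}
    (hy : y ∈ (lowerParts r s).2) :
    y + (if 1 ∈ s then 0 else 1) ≤ (lowerParts r s).1 := by
  have hrank := hs.2
  rw [rank] at hrank
  obtain ⟨x, hx, rfl⟩ := mem_map.1 hy
  have hxsup : x ≤ s.sup := le_sup (mem_of_mem_erase hx)
  have hx2 := two_le_of_mem_erase_one hs.1 x hx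
  simp only [lowerParts]
  split_ifs with h
  · have hcard := card_erase_of_mem h
    have hpos := card_pos_iff_exists_mem.2 ⟨1, h⟩
    rw [Nat.pred_eq_sub_one] at hcard
    omega
  · rw [erase_of_notMem h]
    omega

lemma noRepeatedOdd_map_sub_two {s : Multiset ℕ} (hs : s ∈ oddDistinctPartitions) :
    NoRepeatedOdd ((s.erase 1).map (· - 2)) := by
  intro i hi
  rw [← count_map_add_two, map_add_two_map_sub_two (two_le_of_mem_erase_one hs)]
  exact (count_le_of_le _ (erase_le _ _)).trans (hs.2 _ (odd_add_two.2 hi))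

lemma mapsTo_lowerParts (hr : r ≠ -1) :
    Set.MapsTo (lowerParts r) (rankLE (r + 1)) (paddedPairs r) := by
  intro s hs
  refine ⟨half_lowerParts_fst hr hs,
    fun y hy => le_of_add_le_left (le_lowerParts_fst hs hy), fun i hi => ?_⟩
  rw [count_cons]
  split_ifs with htop
  · have h1 : 1 ∉ s := fun h =>
      Nat.not_even_iff_odd.2 hi (htop ▸ (even_lowerParts_fst hr hs).2 h)
    rw [count_eq_zero_of_notMem]
    intro hmem
    have := le_lowerParts_fst hs hmem
    rw [if_neg h1] at this
    omega
  · exact noRepeatedOdd_map_sub_two hs.1 i hi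

lemma lowerParts_raiseParts {x : ℕ × Multiset ℕ} (hx : x ∈ paddedPairs r) :
    lowerParts r (raiseParts x) = x := by
  have hcard := hx.1
  rw [lowerParts, erase_one_raiseParts]
  ext1
  · simp only [one_mem_raiseParts, card_map]
    split_ifs with h
    · obtain ⟨k, hk⟩ := h
      omega
    · obtain ⟨k, hk⟩ := Nat.not_even_iff_odd.1 h
      omega
  · simp [map_map]

lemma raiseParts_lowerParts (hr : r ≠ -1) {s : Multiset ℕ} (hs : s ∈ rankLE (r + 1)) :
    raiseParts (lowerParts r s) = s := by
  rw [raiseParts]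
  simp only [even_lowerParts_fst hr hs]
  rw [lowerParts, map_add_two_map_sub_two (two_le_of_mem_erase_one hs.1)]
  split_ifs with h
  · rw [add_comm, singleton_add, cons_erase h]
  · rw [add_zero, erase_of_notMem h]

lemma bijOn_raiseParts (hr : r ≠ -1) :
    Set.BijOn raiseParts (paddedPairs r) (rankLE (r + 1)) :=
  Set.InvOn.bijOn (f' := lowerParts r)
    ⟨fun _ => lowerParts_raiseParts, fun _ => raiseParts_lowerParts hr⟩
    (mapsTo_raiseParts r) (mapsTo_lowerParts hr)

end RaiseParts

lemma sum_insertTop (x : ℕ × Multiset ℕ) : (insertTop x).sum = x.1 + x.2.sum := by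
  simpa [insertTop] using congrArg Multiset.sum (filter_ne_add_replicate_count (x.1 ::ₘ x.2) 0)

lemma sum_raiseParts (x : ℕ × Multiset ℕ) :
    (raiseParts x).sum = x.2.sum + 2 * card x.2 + if Even x.1 then 1 else 0 := by
  rw [raiseParts, sum_add, sum_map_add]
  split_ifs <;> simp <;> ring

lemma sum_insertTop_eq_sum_raiseParts {r : ℤ} {x : ℕ × Multiset ℕ} (hx : x ∈ paddedPairs r) :
    ((insertTop x).sum : ℤ) = (raiseParts x).sum + (2 * r + 1) := by
  have hcard := hx.1
  rw [sum_insertTop, sum_raiseParts]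
  split_ifs with h
  · obtain ⟨k, hk⟩ := h
    push_cast
    omega
  · obtain ⟨k, hk⟩ := Nat.not_even_iff_odd.1 h
    push_cast
    omega

theorem tsum_rankGE {r : ℤ} (hr : r ≠ -1) {q : ℂ} (hq : q ≠ 0) :
    ∑' s : rankGE r, q ^ (s : Multiset ℕ).sum =
      q ^ (2 * r + 1) * ∑' s : rankLE (r + 1), q ^ (s : Multiset ℕ).sum := by
  rw [← ((bijOn_insertTop r).equiv _).tsum_eq, ← ((bijOn_raiseParts hr).equiv _).tsum_eq,
    ← tsum_mul_left]
  refine tsum_congr fun x => ?_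
  change q ^ (insertTop x).sum = _ * q ^ (raiseParts x).sum
  rw [← zpow_natCast, ← zpow_natCast, sum_insertTop_eq_sum_raiseParts x.2, zpow_add₀ hq, mul_comm]

end Bijection

/-! ### Generating functions by rank -/

/-- Partitions of all sizes, encoded by their multisets of parts. -/
def sigmaPartitionEquiv : (Σ n : ℕ, n.Partition) ≃ {s : Multiset ℕ | 0 ∉ s} where
  toFun x := ⟨x.2.parts, fun h => lt_irrefl 0 (x.2.parts_pos h)⟩
  invFun s :=
    ⟨s.1.sum, ⟨s.1, fun {_} hi => Nat.pos_of_ne_zero (ne_of_mem_of_not_mem hi s.2), rfl⟩⟩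
  left_inv := by
    rintro ⟨n, p, hp, rfl⟩
    rfl
  right_inv _ := rfl

lemma card_partition_le (n : ℕ) : Fintype.card n.Partition ≤ 2 ^ n := by
  refine (Fintype.card_le_of_surjective _ Nat.Partition.ofComposition_surj).trans ?_
  rw [composition_card]
  exact Nat.pow_le_pow_right (by norm_num) (Nat.sub_le _ _)

lemma summable_partition_pow {x : ℝ} (h0 : 0 ≤ x) (h1 : x < 1 / 2) :
    Summable fun y : Σ n : ℕ, n.Partition => x ^ y.1 := by
  rw [summable_sigma_of_nonneg (fun _ => by positivity)]
  refine ⟨fun n => (hasSum_fintype _).summable, ?_⟩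
  refine Summable.of_nonneg_of_le (fun n => tsum_nonneg fun _ => by positivity) (fun n => ?_)
    (summable_geometric_of_lt_one (r := 2 * x) (by positivity) (by linarith))
  simp only
  rw [tsum_fintype, Finset.sum_const, nsmul_eq_mul, mul_pow, Finset.card_univ]
  gcongr
  exact_mod_cast card_partition_le n

/-- The weight `q ^ |s|` of a partition without repeated odd parts, and `0` for other multisets. -/
noncomputable def weight (q : ℂ) (s : Multiset ℕ) : ℂ :=
  oddDistinctPartitions.indicator (fun s => q ^ s.sum) s

/-- The generating function of partitions without repeated odd parts, counted with coefficients
`c`. -/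
noncomputable def weightedSum (q : ℂ) (c : Multiset ℕ → ℂ) : ℂ := ∑' s, c s * weight q s

/-- The generating function of all partitions without repeated odd parts. -/
noncomputable def partitionSeries (q : ℂ) : ℂ := weightedSum q fun _ => 1

/-- The generating function of the partitions without repeated odd parts of rank at least `r`. -/
noncomputable def rankTail (q : ℂ) (r : ℤ) : ℂ :=
  weightedSum q fun s => if r ≤ rank s then 1 else 0

lemma norm_ite_one_zero_le (p : Prop) [Decidable p] : ‖(if p then 1 else 0 : ℂ)‖ ≤ 1 := by
  split_ifs <;> simp

section WeightedSum

variable {q : ℂ} (hq1 : ‖q‖ < 1 / 2) {c d : Multiset ℕ → ℂ} {C D : ℝ}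
include hq1

lemma summable_norm_weight : Summable fun s => ‖weight q s‖ := by
  have hpos : Summable (fun s : {s : Multiset ℕ | 0 ∉ s} => ‖q‖ ^ (s : Multiset ℕ).sum) :=
    (sigmaPartitionEquiv.symm.summable_iff).2 (summable_partition_pow (norm_nonneg q) hq1)
  rw [← Function.comp_def (fun s : Multiset ℕ => ‖q‖ ^ s.sum) Subtype.val,
    summable_subtype_iff_indicator] at hpos
  refine hpos.of_nonneg_of_le (fun _ => norm_nonneg _) fun s => ?_
  rw [weight, norm_indicator_eq_indicator_norm]
  simp only [norm_pow]
  exact Set.indicator_le_indicator_of_subset (fun s hs => hs.1) (fun _ => by positivity) s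

lemma summable_mul_weight (hc : ∀ s, ‖c s‖ ≤ C) : Summable fun s => c s * weight q s := by
  refine Summable.of_norm_bounded ((summable_norm_weight hq1).mul_left C) fun s => ?_
  rw [norm_mul]
  exact mul_le_mul_of_nonneg_right (hc s) (norm_nonneg _)

lemma weightedSum_add (hc : ∀ s, ‖c s‖ ≤ C) (hd : ∀ s, ‖d s‖ ≤ D) :
    weightedSum q (fun s => c s + d s) = weightedSum q c + weightedSum q d := by
  simp only [weightedSum, add_mul]
  exact (summable_mul_weight hq1 hc).tsum_add (summable_mul_weight hq1 hd)

lemma weightedSum_sub (hc : ∀ s, ‖c s‖ ≤ C) (hd : ∀ s, ‖d s‖ ≤ D) :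
    weightedSum q (fun s => c s - d s) = weightedSum q c - weightedSum q d := by
  simp only [weightedSum, sub_mul]
  exact (summable_mul_weight hq1 hc).tsum_sub (summable_mul_weight hq1 hd)

lemma norm_weightedSum_le (hc : ∀ s, ‖c s‖ ≤ 1) : ‖weightedSum q c‖ ≤ ∑' s, ‖weight q s‖ := by
  refine tsum_of_norm_bounded (summable_norm_weight hq1).hasSum fun s => ?_
  rw [norm_mul]
  exact mul_le_of_le_one_left (norm_nonneg _) (hc s)

lemma norm_partitionSeries_le : ‖partitionSeries q‖ ≤ ∑' s, ‖weight q s‖ :=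
  norm_weightedSum_le hq1 fun _ => by simp

lemma norm_rankTail_le (r : ℤ) : ‖rankTail q r‖ ≤ ∑' s, ‖weight q s‖ :=
  norm_weightedSum_le hq1 fun _ => norm_ite_one_zero_le _

end WeightedSum

lemma tsum_subtype_eq_weightedSum (q : ℂ) {p : Multiset ℕ → Prop} [DecidablePred p]
    {A : Set (Multiset ℕ)} (hA : ∀ s, s ∈ A ↔ s ∈ oddDistinctPartitions ∧ p s) :
    ∑' s : A, q ^ (s : Multiset ℕ).sum = weightedSum q fun s => if p s then 1 else 0 := by
  classical
  rw [tsum_subtype A (fun s : Multiset ℕ => q ^ s.sum), weightedSum]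
  refine tsum_congr fun s => ?_
  rw [weight, Set.indicator_apply, Set.indicator_apply]
  by_cases hs : s ∈ oddDistinctPartitions <;> by_cases hp : p s <;> simp [hs, hp, hA]

section RankRecurrence

variable {q : ℂ} (hq : q ≠ 0) (hq1 : ‖q‖ < 1 / 2)
include hq1

lemma tsum_rankLE (r : ℤ) :
    ∑' s : rankLE r, q ^ (s : Multiset ℕ).sum = partitionSeries q - rankTail q (r + 1) := by
  rw [tsum_subtype_eq_weightedSum q (A := rankLE r) (p := fun s => rank s ≤ r) (fun s => Iff.rfl),
    partitionSeries, rankTail,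
    ← weightedSum_sub hq1 (C := 1) (D := 1) (by simp) (fun _ => norm_ite_one_zero_le _)]
  congr 1
  funext s
  by_cases h : rank s ≤ r
  · simp [h, show ¬ r + 1 ≤ rank s by omega]
  · simp [h, show r + 1 ≤ rank s by omega]

include hq

lemma rankTail_eq {r : ℤ} (hr : 1 ≤ r ∨ r ≤ -2) :
    rankTail q r = q ^ (2 * r + 1) * (partitionSeries q - rankTail q (r + 2)) := by
  rw [show r + 2 = r + 1 + 1 by ring, ← tsum_rankLE hq1, ← tsum_rankGE (by omega) hq, eq_comm]
  refine tsum_subtype_eq_weightedSum q fun s => ⟨fun h => ⟨h.1, h.2.1⟩, fun h => ⟨h.1, h.2, ?_⟩⟩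
  rintro hr0 rfl
  have hrank := h.2
  simp only [rank, Multiset.sup_zero, Multiset.card_zero] at hrank
  norm_num at hrank
  omega

/- The summand `1` is the empty partition, which `rankGE 0` omits. -/
lemma rankTail_zero : rankTail q 0 = 1 + q * (partitionSeries q - rankTail q 2) := by
  have h := tsum_rankGE (r := 0) (by omega) hq
  rw [tsum_rankLE hq1, tsum_subtype_eq_weightedSum q (A := rankGE 0)
    (p := fun s => 0 ≤ rank s ∧ s ≠ 0) (by intro s; simp [rankGE]; tauto)] at h
  simp only [mul_zero, zero_add, zpow_one, one_add_one_eq_two] at h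
  have hempty : (1 : ℂ) = weightedSum q fun s => if s = 0 then 1 else 0 := by
    rw [weightedSum, tsum_eq_single 0 (fun s hs => by simp [hs])]
    simp [weight, oddDistinctPartitions, NoRepeatedOdd]
  rw [hempty, ← h, rankTail, ← weightedSum_add hq1 (C := 1) (D := 1)
    (fun _ => norm_ite_one_zero_le _) (fun _ => norm_ite_one_zero_le _)]
  congr 1
  funext s
  rcases eq_or_ne s 0 with rfl | hs
  · simp [rank]
  · simp [hs]

end RankRecurrence

/-! ### Solving the rank recurrences -/

lemma eq_zero_of_norm_le_half_norm_add_two {F : ℕ → ℂ} {C : ℝ} (hC : ∀ r, ‖F r‖ ≤ C)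
    (hF : ∀ r, 1 ≤ r → ‖F r‖ ≤ 1 / 2 * ‖F (r + 2)‖) {r : ℕ} (hr : 1 ≤ r) : F r = 0 := by
  have hpow (k : ℕ) : ∀ r : ℕ, 1 ≤ r → ‖F r‖ ≤ (1 / 2) ^ k * C := by
    induction k with
    | zero =>
      intro r _
      simpa using hC r
    | succ k ih =>
      intro r hr
      calc ‖F r‖ ≤ 1 / 2 * ‖F (r + 2)‖ := hF r hr
        _ ≤ 1 / 2 * ((1 / 2) ^ k * C) := by
          gcongr
          exact ih (r + 2) (by omega)
        _ = (1 / 2) ^ (k + 1) * C := by ring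
  have hlim : Filter.Tendsto (fun k : ℕ => (1 / 2 : ℝ) ^ k * C) Filter.atTop (nhds (0 * C)) :=
    (tendsto_pow_atTop_nhds_zero_of_lt_one (by norm_num) (by norm_num)).mul_const C
  have hle := ge_of_tendsto' hlim fun k => hpow k r hr
  rw [zero_mul] at hle
  exact norm_le_zero_iff.1 hle

lemma norm_pow_odd_le_half {q : ℂ} (hq1 : ‖q‖ < 1 / 2) (r : ℕ) :
    ‖q ^ (2 * r + 1)‖ ≤ 1 / 2 := by
  rw [norm_pow]
  calc ‖q‖ ^ (2 * r + 1) ≤ ‖q‖ ^ 1 :=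
        pow_le_pow_of_le_one (norm_nonneg q) (by linarith) (by omega)
    _ ≤ 1 / 2 := by rw [pow_one]; exact hq1.le

/- The difference of the two sides solves the homogeneous recurrence, hence vanishes. -/
lemma rankTail_add_rankTail_one_sub {q : ℂ} (hq : q ≠ 0) (hq1 : ‖q‖ < 1 / 2) {r : ℕ}
    (hr : 1 ≤ r) : rankTail q r + rankTail q (1 - r) = partitionSeries q := by
  rw [← sub_eq_zero]
  refine eq_zero_of_norm_le_half_norm_add_two
    (F := fun r : ℕ => rankTail q r + rankTail q (1 - r) - partitionSeries q)
    (C := 3 * ∑' s, ‖weight q s‖) (fun r => ?_) (fun r hr => ?_) hr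
  · calc ‖rankTail q r + rankTail q (1 - r) - partitionSeries q‖
        ≤ ‖rankTail q r‖ + ‖rankTail q (1 - r)‖ + ‖partitionSeries q‖ :=
          (norm_sub_le _ _).trans (by gcongr; exact norm_add_le _ _)
      _ ≤ 3 * ∑' s, ‖weight q s‖ := by
          linarith [norm_rankTail_le hq1 r, norm_rankTail_le hq1 (1 - r),
            norm_partitionSeries_le hq1]
  · have hpos := rankTail_eq hq hq1 (r := r) (by omega)
    have hneg := rankTail_eq hq hq1 (r := -1 - r) (by omega)
    rw [show 2 * (-1 - (r : ℤ)) + 1 = -(2 * r + 1) by ring, zpow_neg,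
      show -1 - (r : ℤ) + 2 = 1 - r by ring] at hneg
    have hz : q ^ (2 * (r : ℤ) + 1) ≠ 0 := zpow_ne_zero _ hq
    have hrec : rankTail q r + rankTail q (1 - r) - partitionSeries q = -q ^ (2 * r + 1) *
        (rankTail q ((r + 2 : ℕ)) + rankTail q (1 - (r + 2 : ℕ)) - partitionSeries q) := by
      have hcast : q ^ (2 * r + 1) = q ^ (2 * (r : ℤ) + 1) := by norm_cast
      rw [show (1 - ((r + 2 : ℕ) : ℤ)) = -1 - r by push_cast; ring, Nat.cast_add, Nat.cast_ofNat,
        hneg, hcast, hpos]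
      field_simp
      ring
    rw [hrec, norm_mul, norm_neg]
    exact mul_le_mul_of_nonneg_right (norm_pow_odd_le_half hq1 r) (norm_nonneg _)

/-- The one-sided theta series `∑_{k ≥ 1} Q ^ (2 k ^ 2 - k + 2 r k)`, in terms of which the
recurrences for `rankTail (-Q)` are solved. -/
noncomputable def partialTheta (Q : ℂ) (r : ℕ) : ℂ :=
  ∑' n : ℕ, Q ^ ((n + 1) * (2 * n + 1 + 2 * r))

/-- Ramanujan's theta series `ψ(Q) = ∑_{n ≥ 0} Q ^ (n (n + 1) / 2)`; the numbers `n (2 n - 1)`,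
`n ∈ ℤ`, are the triangular numbers. -/
noncomputable def psi (Q : ℂ) : ℂ := ∑' n : ℤ, Q ^ (n * (2 * n - 1))

section PartialTheta

variable {Q : ℂ} (hQ1 : ‖Q‖ < 1 / 2)
include hQ1

lemma norm_partialTheta_term_le (r n : ℕ) :
    ‖Q ^ ((n + 1) * (2 * n + 1 + 2 * r))‖ ≤ ‖Q‖ ^ r * ‖Q‖ ^ n := by
  rw [norm_pow, ← pow_add]
  exact pow_le_pow_of_le_one (norm_nonneg _) (by linarith) (by nlinarith)

lemma summable_partialTheta (r : ℕ) :
    Summable fun n : ℕ => Q ^ ((n + 1) * (2 * n + 1 + 2 * r)) :=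
  Summable.of_norm_bounded
    ((summable_geometric_of_lt_one (norm_nonneg Q) (by linarith)).mul_left _)
    (norm_partialTheta_term_le hQ1 r)

lemma norm_partialTheta_le (r : ℕ) : ‖partialTheta Q r‖ ≤ (1 - ‖Q‖)⁻¹ := by
  refine tsum_of_norm_bounded
    (hasSum_geometric_of_lt_one (norm_nonneg Q) (by linarith)) fun n => ?_
  refine (norm_partialTheta_term_le hQ1 r n).trans (mul_le_of_le_one_left (by positivity) ?_)
  exact pow_le_one₀ (norm_nonneg _) (by linarith)

lemma partialTheta_eq (r : ℕ) :
    partialTheta Q r = Q ^ (2 * r + 1) * (1 + partialTheta Q (r + 2)) := by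
  rw [partialTheta, (summable_partialTheta hQ1 r).tsum_eq_zero_add, mul_add (Q ^ _),
    mul_one (Q ^ _), partialTheta, ← tsum_mul_left]
  congr 1
  · congr 1
    ring
  · refine tsum_congr fun n => ?_
    rw [← pow_add]
    congr 1
    ring

lemma psi_eq_partialTheta : psi Q = 1 + partialTheta Q 0 + partialTheta Q 1 := by
  have hpos (n : ℕ) : Q ^ (((n : ℤ) + 1) * (2 * ((n : ℤ) + 1) - 1))
      = Q ^ ((n + 1) * (2 * n + 1 + 2 * 0)) := by
    rw [← zpow_natCast]
    congr 1
    push_cast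
    ring
  have hneg (n : ℕ) : Q ^ (-((n : ℤ) + 1) * (2 * -((n : ℤ) + 1) - 1))
      = Q ^ ((n + 1) * (2 * n + 1 + 2 * 1)) := by
    rw [← zpow_natCast]
    congr 1
  rw [psi, tsum_of_add_one_of_neg_add_one
    ((summable_partialTheta hQ1 0).congr fun n => (hpos n).symm)
    ((summable_partialTheta hQ1 1).congr fun n => (hneg n).symm), tsum_congr hpos,
    tsum_congr hneg, zero_mul, zpow_zero, partialTheta, partialTheta]
  ring

/- Both sides solve the same recurrence. -/
lemma rankTail_neg_eq (hQ : Q ≠ 0) {r : ℕ} (hr : 1 ≤ r) :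
    rankTail (-Q) r = -partitionSeries (-Q) * partialTheta Q r := by
  have hQ1' : ‖-Q‖ < 1 / 2 := by rwa [norm_neg]
  rw [← sub_eq_zero]
  refine eq_zero_of_norm_le_half_norm_add_two
    (F := fun r : ℕ => rankTail (-Q) r - -partitionSeries (-Q) * partialTheta Q r)
    (C := (∑' s, ‖weight (-Q) s‖) + (∑' s, ‖weight (-Q) s‖) * (1 - ‖Q‖)⁻¹) (fun r => ?_)
    (fun r hr => ?_) hr
  · refine (norm_sub_le _ _).trans ?_
    rw [norm_mul, norm_neg]
    exact add_le_add (norm_rankTail_le hQ1' _) (mul_le_mul (norm_partitionSeries_le hQ1')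
      (norm_partialTheta_le hQ1 r) (norm_nonneg _) (tsum_nonneg fun _ => norm_nonneg _))
  · have hodd : (-Q) ^ (2 * (r : ℤ) + 1) = -Q ^ (2 * r + 1) := by
      rw [← Odd.neg_pow ⟨r, rfl⟩]
      norm_cast
    have hrec : rankTail (-Q) r - -partitionSeries (-Q) * partialTheta Q r = Q ^ (2 * r + 1) *
        (rankTail (-Q) (r + 2 : ℕ) - -partitionSeries (-Q) * partialTheta Q (r + 2)) := by
      rw [partialTheta_eq hQ1 r, rankTail_eq (neg_ne_zero.2 hQ) hQ1' (by omega), hodd]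
      push_cast
      ring
    rw [hrec, norm_mul]
    exact mul_le_mul_of_nonneg_right (norm_pow_odd_le_half hQ1 r) (norm_nonneg _)

lemma rankTail_neg_zero (hQ : Q ≠ 0) :
    rankTail (-Q) 0 = 1 - partitionSeries (-Q) * partialTheta Q 0 := by
  have hQ1' : ‖-Q‖ < 1 / 2 := by rwa [norm_neg]
  have h2 := rankTail_neg_eq hQ1 hQ (r := 2) (by norm_num)
  rw [Nat.cast_ofNat] at h2
  rw [rankTail_zero (neg_ne_zero.2 hQ) hQ1', partialTheta_eq hQ1 0, h2]
  ring

/- `rankTail (-Q) 1` and `rankTail (-Q) 0` add up to `partitionSeries (-Q)`. -/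
lemma partitionSeries_neg_mul_psi (hQ : Q ≠ 0) : partitionSeries (-Q) * psi Q = 1 := by
  have hQ1' : ‖-Q‖ < 1 / 2 := by rwa [norm_neg]
  have hsymm := rankTail_add_rankTail_one_sub (neg_ne_zero.2 hQ) hQ1' (le_refl 1)
  rw [rankTail_neg_eq hQ1 hQ (le_refl 1), Nat.cast_one, sub_self,
    rankTail_neg_zero hQ1 hQ] at hsymm
  rw [psi_eq_partialTheta hQ1]
  linear_combination -hsymm

lemma psi_ne_zero (hQ : Q ≠ 0) : psi Q ≠ 0 :=
  right_ne_zero_of_mul_eq_one (partitionSeries_neg_mul_psi hQ1 hQ)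

end PartialTheta

/-! ### Theta functions and Appell–Lerch sums -/

/-- The exponent `n (n - 1) / 2`; the division is exact. -/
def tri (n : ℤ) : ℤ := n * (n - 1) / 2

lemma two_mul_tri (n : ℤ) : 2 * tri n = n * (n - 1) :=
  Int.mul_ediv_cancel' (Int.even_mul_pred_self n).two_dvd

lemma tri_succ (n : ℤ) : tri (n + 1) = tri n + n := by
  linarith [two_mul_tri n, two_mul_tri (n + 1)]

lemma tri_neg (n : ℤ) : tri (-n) = tri n + n := by
  linarith [two_mul_tri n, two_mul_tri (-n)]

/-- The coefficients `(-1)ⁿ p^(n(n-1)/2)` of the theta function in base `p`. -/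
noncomputable def thetaCoeff (p : ℂ) (n : ℤ) : ℂ := (-1) ^ n * p ^ tri n

/-- The coefficients `(-1)ⁿ p^(n(n+1)/2) / (1 - b pⁿ)` of the Appell–Lerch sum. A coefficient whose
denominator vanishes is read as zero. -/
noncomputable def appellCoeff (p b : ℂ) (n : ℤ) : ℂ := thetaCoeff p n * p ^ n / (1 - b * p ^ n)

/-- The theta function `j(x; p) = ∑ (-1)ⁿ p^(n(n-1)/2) xⁿ`. -/
noncomputable def theta (p x : ℂ) : ℂ := ∑' n : ℤ, thetaCoeff p n * x ^ n

/-- The derivative `x d/dx` of `theta p` at `x`. -/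
noncomputable def thetaDeriv (p x : ℂ) : ℂ := ∑' n : ℤ, n * thetaCoeff p n * x ^ n

/-- The Appell–Lerch sum `∑ (-1)ⁿ p^(n(n+1)/2) xⁿ / (1 - b pⁿ)`. The singular term that occurs when
`b` is a power of `p` is omitted. -/
noncomputable def appell (p x b : ℂ) : ℂ := ∑' n : ℤ, appellCoeff p b n * x ^ n

lemma thetaCoeff_zero (p : ℂ) : thetaCoeff p 0 = 1 := by simp [thetaCoeff, tri]

lemma zpow_ne_one {p : ℂ} (hp1 : ‖p‖ < 1) {n : ℤ} (hn : n ≠ 0) : p ^ n ≠ 1 := by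
  intro h
  have hnorm : ‖p‖ ^ n = 1 := by rw [← norm_zpow, h, norm_one]
  exact hn ((zpow_eq_one_iff_right₀ (norm_nonneg _) hp1.ne).1 hnorm)

lemma exists_norm_inv_one_sub_mul_pow_le {p : ℂ} (hp1 : ‖p‖ < 1) (b : ℂ) :
    ∃ C, ∀ n : ℕ, ‖(1 - b * p ^ n)⁻¹‖ ≤ C := by
  have hlim := ((((tendsto_pow_atTop_nhds_zero_of_norm_lt_one hp1).const_mul b).const_sub 1).inv₀
    (by simp)).norm
  obtain ⟨C, hC⟩ := hlim.bddAbove_range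
  exact ⟨C, fun n => hC ⟨n, rfl⟩⟩

lemma norm_intCast_le_two_zpow_add (n : ℤ) : ‖(n : ℂ)‖ ≤ 2 ^ n + (2 : ℝ)⁻¹ ^ n := by
  have hle (k : ℕ) : (k : ℝ) ≤ 2 ^ k := mod_cast k.lt_two_pow_self.le
  obtain ⟨k, rfl | rfl⟩ := n.eq_nat_or_neg
  · rw [Int.cast_natCast, Complex.norm_natCast, zpow_natCast]
    exact (hle k).trans (le_add_of_nonneg_right (by positivity))
  · rw [Int.cast_neg, norm_neg, Int.cast_natCast, Complex.norm_natCast, inv_zpow', neg_neg,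
      zpow_natCast]
    exact (hle k).trans (le_add_of_nonneg_left (by positivity))

lemma appellCoeff_mul {p b : ℂ} (hb : ∀ n : ℤ, b * p ^ n ≠ 1) (n : ℤ) :
    appellCoeff p b n * (1 - b * p ^ n) = thetaCoeff p n * p ^ n :=
  div_mul_cancel₀ _ (sub_ne_zero.2 (hb n).symm)

lemma appellCoeff_one_mul {p : ℂ} (hp1 : ‖p‖ < 1) (n : ℤ) :
    appellCoeff p 1 n * (1 - 1 * p ^ n) = thetaCoeff p n * p ^ n - if n = 0 then 1 else 0 := by
  rcases eq_or_ne n 0 with rfl | hn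
  · simp [thetaCoeff_zero]
  · rw [if_neg hn, sub_zero, one_mul, appellCoeff, one_mul,
      div_mul_cancel₀ _ (sub_ne_zero.2 (zpow_ne_one hp1 hn).symm)]

section Nome

variable {p : ℂ} (hp : p ≠ 0)

include hp

lemma thetaCoeff_ne_zero (n : ℤ) : thetaCoeff p n ≠ 0 :=
  mul_ne_zero (zpow_ne_zero _ (neg_ne_zero.2 one_ne_zero)) (zpow_ne_zero _ hp)

lemma thetaCoeff_succ (n : ℤ) : thetaCoeff p (n + 1) = -(p ^ n * thetaCoeff p n) := by
  rw [thetaCoeff, thetaCoeff, tri_succ, zpow_add₀ hp,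
    zpow_add₀ (neg_ne_zero.2 one_ne_zero), zpow_one]
  ring

lemma thetaCoeff_neg (n : ℤ) : thetaCoeff p (-n) = p ^ n * thetaCoeff p n := by
  rw [thetaCoeff, thetaCoeff, tri_neg, zpow_add₀ hp, zpow_neg, ← inv_zpow, inv_neg_one]
  ring

lemma eq_thetaCoeff_mul {F : ℤ → ℂ} (hF : ∀ n, F (n + 1) = -(p ^ n * F n)) (n : ℤ) :
    F n = thetaCoeff p n * F 0 := by
  induction n using Int.induction_on with
  | zero => rw [thetaCoeff_zero, one_mul]
  | succ i ih => rw [hF, thetaCoeff_succ hp, ih]; ring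
  | pred i ih =>
    have hFi := hF (-(i : ℤ) - 1)
    have hci := thetaCoeff_succ hp (-(i : ℤ) - 1)
    rw [sub_add_cancel] at hFi hci
    rw [hFi, hci] at ih
    refine mul_left_cancel₀ (zpow_ne_zero (-(i : ℤ) - 1) hp) ?_
    linear_combination -ih

lemma eq_mul_theta_of_hasSum {F : ℤ → ℂ} (hF : ∀ n, F (n + 1) = -(p ^ n * F n)) {c S : ℂ}
    (hS : HasSum (fun n => F n * c ^ n) S) : S = F 0 * theta p c := by
  rw [theta, ← tsum_mul_left, ← hS.tsum_eq]
  refine tsum_congr fun n => ?_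
  rw [eq_thetaCoeff_mul hp hF n]
  ring

lemma theta_mul {x : ℂ} (hx : x ≠ 0) : theta p (p * x) = -x⁻¹ * theta p x := by
  rw [theta, theta, ← tsum_mul_left,
    ← (Equiv.addRight (1 : ℤ)).tsum_eq fun n : ℤ => -x⁻¹ * (thetaCoeff p n * x ^ n)]
  refine tsum_congr fun n => ?_
  rw [Equiv.coe_addRight, thetaCoeff_succ hp, zpow_add_one₀ hx, mul_zpow]
  field_simp

lemma theta_inv {x : ℂ} (hx : x ≠ 0) : theta p x⁻¹ = -x⁻¹ * theta p x := by
  rw [← theta_mul hp hx, theta, theta, ← (Equiv.neg ℤ).tsum_eq]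
  refine tsum_congr fun n => ?_
  rw [Equiv.neg_apply, thetaCoeff_neg hp, inv_zpow', neg_neg, mul_zpow]
  ring

lemma theta_one : theta p 1 = 0 := by
  have h := theta_inv hp one_ne_zero
  rw [inv_one] at h
  linear_combination h / 2

lemma appell_one_one : appell p 1 1 = 0 := by
  have hodd : appell p 1 1 = -appell p 1 1 := by
    conv_lhs => rw [appell, ← (Equiv.neg ℤ).tsum_eq]
    rw [appell, ← tsum_neg]
    refine tsum_congr fun n => ?_
    rw [Equiv.neg_apply, appellCoeff, appellCoeff, thetaCoeff_neg hp, zpow_neg, one_zpow, one_zpow,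
      one_mul, one_mul]
    have hpn : p ^ n ≠ 0 := zpow_ne_zero n hp
    rw [show 1 - (p ^ n)⁻¹ = -(1 - p ^ n) / p ^ n by field_simp; ring, div_div_eq_mul_div, div_neg]
    field_simp
  linear_combination hodd / 2

variable (hp1 : ‖p‖ < 1)

include hp1

lemma exists_norm_inv_one_sub_mul_zpow_le {b : ℂ} (hb : b ≠ 0) :
    ∃ C, ∀ n : ℤ, ‖(1 - b * p ^ n)⁻¹‖ ≤ C := by
  obtain ⟨C₁, hC₁⟩ := exists_norm_inv_one_sub_mul_pow_le hp1 b
  obtain ⟨C₂, hC₂⟩ := exists_norm_inv_one_sub_mul_pow_le hp1 b⁻¹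
  refine ⟨max C₁ (‖b⁻¹‖ * C₂), fun n => ?_⟩
  obtain ⟨k, rfl | rfl⟩ := n.eq_nat_or_neg
  · rw [zpow_natCast]
    exact le_max_of_le_left (hC₁ k)
  · have hpk : p ^ k ≠ 0 := pow_ne_zero k hp
    have hinv : (1 - b * p ^ (-(k : ℤ)))⁻¹ = -(b⁻¹ * p ^ k * (1 - b⁻¹ * p ^ k)⁻¹) := by
      rw [zpow_neg, zpow_natCast, show 1 - b * (p ^ k)⁻¹ = -(1 - b⁻¹ * p ^ k) / (b⁻¹ * p ^ k) by
        field_simp; ring, inv_div, div_neg, div_eq_mul_inv]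
    rw [hinv, norm_neg, norm_mul, norm_mul, norm_pow]
    refine le_max_of_le_right (mul_le_mul ?_ (hC₂ k) (norm_nonneg _) (norm_nonneg _))
    exact mul_le_of_le_one_right (norm_nonneg _) (pow_le_one₀ (norm_nonneg _) hp1.le)

lemma summable_norm_thetaCoeff_mul_pow {x : ℂ} (hx : x ≠ 0) :
    Summable fun n : ℕ => ‖thetaCoeff p n * x ^ (n : ℤ)‖ := by
  have hne (n : ℤ) : ‖thetaCoeff p n * x ^ n‖ ≠ 0 :=
    norm_ne_zero_iff.2 (mul_ne_zero (thetaCoeff_ne_zero hp n) (zpow_ne_zero n hx))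
  refine summable_of_ratio_test_tendsto_lt_one (l := 0) one_pos (.of_forall fun n => hne n) ?_
  have hratio (n : ℕ) : ‖‖thetaCoeff p (n + 1 : ℕ) * x ^ ((n + 1 : ℕ) : ℤ)‖‖ /
      ‖‖thetaCoeff p n * x ^ (n : ℤ)‖‖ = ‖p‖ ^ n * ‖x‖ := by
    rw [norm_norm, norm_norm, div_eq_iff (hne n), Nat.cast_succ, thetaCoeff_succ hp,
      zpow_add_one₀ hx]
    simp only [norm_mul, norm_neg, zpow_natCast, norm_pow]
    ring
  simp only [hratio]
  simpa only [zero_mul] using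
    (tendsto_pow_atTop_nhds_zero_of_lt_one (norm_nonneg p) hp1).mul_const ‖x‖

lemma summable_norm_thetaCoeff_mul_zpow {x : ℂ} (hx : x ≠ 0) :
    Summable fun n : ℤ => ‖thetaCoeff p n * x ^ n‖ := by
  refine Summable.of_nat_of_neg (summable_norm_thetaCoeff_mul_pow hp hp1 hx) ?_
  refine (summable_norm_thetaCoeff_mul_pow hp hp1 (div_ne_zero hp hx)).congr fun n => ?_
  rw [thetaCoeff_neg hp, div_zpow, zpow_neg]
  congr 1
  ring

lemma summable_thetaCoeff_mul_zpow {x : ℂ} (hx : x ≠ 0) :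
    Summable fun n : ℤ => thetaCoeff p n * x ^ n :=
  (summable_norm_thetaCoeff_mul_zpow hp hp1 hx).of_norm

lemma summable_int_mul_thetaCoeff_mul_zpow {x : ℂ} (hx : x ≠ 0) :
    Summable fun n : ℤ => n * thetaCoeff p n * x ^ n := by
  refine Summable.of_norm_bounded
    ((summable_norm_thetaCoeff_mul_zpow hp hp1 (mul_ne_zero two_ne_zero hx)).add
      (summable_norm_thetaCoeff_mul_zpow hp hp1 (mul_ne_zero (inv_ne_zero two_ne_zero) hx)))
    fun n => ?_
  have hscale (c : ℂ) :
      ‖thetaCoeff p n * (c * x) ^ n‖ = ‖c‖ ^ n * ‖thetaCoeff p n * x ^ n‖ := by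
    rw [mul_zpow, mul_left_comm, norm_mul, norm_zpow]
  rw [hscale, hscale, ← add_mul, mul_assoc, norm_mul, norm_inv, Complex.norm_ofNat]
  exact mul_le_mul_of_nonneg_right (norm_intCast_le_two_zpow_add n) (norm_nonneg _)

lemma summable_norm_appellCoeff_mul_zpow {x b : ℂ} (hx : x ≠ 0) (hb : b ≠ 0) :
    Summable fun n : ℤ => ‖appellCoeff p b n * x ^ n‖ := by
  obtain ⟨C, hC⟩ := exists_norm_inv_one_sub_mul_zpow_le hp hp1 hb
  refine Summable.of_nonneg_of_le (fun n => norm_nonneg _) (fun n => ?_)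
    ((summable_norm_thetaCoeff_mul_zpow hp hp1 (mul_ne_zero hp hx)).mul_left C)
  have hsplit : appellCoeff p b n * x ^ n =
      (1 - b * p ^ n)⁻¹ * (thetaCoeff p n * (p * x) ^ n) := by
    rw [appellCoeff, mul_zpow]
    ring
  rw [hsplit, norm_mul]
  exact mul_le_mul_of_nonneg_right (hC n) (norm_nonneg _)

lemma thetaDeriv_mul {x : ℂ} (hx : x ≠ 0) :
    thetaDeriv p (p * x) = -x⁻¹ * (thetaDeriv p x - theta p x) := by
  rw [thetaDeriv, thetaDeriv, theta, ← (summable_int_mul_thetaCoeff_mul_zpow hp hp1 hx).tsum_sub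
    (summable_thetaCoeff_mul_zpow hp hp1 hx), ← tsum_mul_left, ← (Equiv.addRight (1 : ℤ)).tsum_eq
    fun n : ℤ => -x⁻¹ * (n * thetaCoeff p n * x ^ n - thetaCoeff p n * x ^ n)]
  refine tsum_congr fun n => ?_
  rw [Equiv.coe_addRight, thetaCoeff_succ hp, zpow_add_one₀ hx, mul_zpow, Int.cast_add,
    Int.cast_one]
  field_simp
  ring

lemma thetaDeriv_inv {x : ℂ} (hx : x ≠ 0) :
    thetaDeriv p x⁻¹ = x⁻¹ * (thetaDeriv p x - theta p x) := by
  rw [← neg_inj, ← neg_mul, ← thetaDeriv_mul hp hp1 hx, thetaDeriv, thetaDeriv,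
    ← (Equiv.neg ℤ).tsum_eq, ← tsum_neg]
  refine tsum_congr fun n => ?_
  rw [Equiv.neg_apply, thetaCoeff_neg hp, inv_zpow', neg_neg, mul_zpow, Int.cast_neg]
  ring

end Nome

/-! ### Products of theta functions and Appell–Lerch sums -/

/-- The convolution of two bilateral sequences, that is, the coefficients of the product of two
Laurent series. -/
noncomputable def conv (f g : ℤ → ℂ) (n : ℤ) : ℂ := ∑' m, f m * g (n - m)

lemma conv_comm (f g : ℤ → ℂ) (n : ℤ) : conv f g n = conv g f n := by
  rw [conv, conv, ← (Equiv.subLeft n).tsum_eq]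
  refine tsum_congr fun m => ?_
  rw [Equiv.subLeft_apply, sub_sub_cancel, mul_comm]

section Conv

variable {f g : ℤ → ℂ} (hf : Summable fun n => ‖f n‖) (hg : Summable fun n => ‖g n‖)

include hf hg

lemma summable_mul_sub : Summable fun z : ℤ × ℤ => f z.2 * g (z.1 - z.2) :=
  (((Equiv.prodComm ℤ ℤ).trans (Equiv.prodShear (.refl ℤ) Equiv.subRight)).summable_iff
    (f := fun z : ℤ × ℤ => f z.1 * g z.2)).2 (summable_mul_of_summable_norm hf hg)

lemma hasSum_conv_apply (n : ℤ) : HasSum (fun m => f m * g (n - m)) (conv f g n) :=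
  ((summable_mul_sub hf hg).prod_factor n).hasSum

lemma hasSum_conv : HasSum (conv f g) ((∑' n, f n) * ∑' n, g n) := by
  rw [tsum_mul_tsum_of_summable_norm hf hg,
    ← ((Equiv.prodComm ℤ ℤ).trans (Equiv.prodShear (.refl ℤ) Equiv.subRight)).tsum_eq]
  exact (summable_mul_sub hf hg).hasSum.prod_fiberwise (hasSum_conv_apply hf hg)

end Conv

/-- The Laurent coefficients, in the variable `x`, of `theta p (x / b₁) * appell p (x / b₂) b₁`. -/
noncomputable def thetaAppellCoeff (p b₁ b₂ : ℂ) : ℤ → ℂ :=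
  conv (fun m => thetaCoeff p m * b₁⁻¹ ^ m) fun m => appellCoeff p b₁ m * b₂⁻¹ ^ m

/-- The Laurent coefficients, in the variable `x`, of `theta p (x / b₁) * theta p (x / b₂)`. -/
noncomputable def thetaThetaCoeff (p b₁ b₂ : ℂ) : ℤ → ℂ :=
  conv (fun m => thetaCoeff p m * b₁⁻¹ ^ m) fun m => thetaCoeff p m * b₂⁻¹ ^ m

lemma thetaThetaCoeff_comm (p b₁ b₂ : ℂ) (n : ℤ) :
    thetaThetaCoeff p b₁ b₂ n = thetaThetaCoeff p b₂ b₁ n :=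
  conv_comm _ _ n

section Products

variable {p : ℂ} (hp : p ≠ 0) (hp1 : ‖p‖ < 1) {a b b₁ b₂ b₃ x : ℂ}

include hp hp1

lemma hasSum_thetaAppellCoeff (hb₁ : b₁ ≠ 0) (hb₂ : b₂ ≠ 0) (hx : x ≠ 0) :
    HasSum (fun n => thetaAppellCoeff p b₁ b₂ n * x ^ n)
      (theta p (x / b₁) * appell p (x / b₂) b₁) := by
  refine (hasSum_conv (summable_norm_thetaCoeff_mul_zpow hp hp1 (div_ne_zero hx hb₁))
    (summable_norm_appellCoeff_mul_zpow hp hp1 (div_ne_zero hx hb₂) hb₁)).congr_fun fun n => ?_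
  rw [thetaAppellCoeff, conv, conv, ← tsum_mul_right]
  refine tsum_congr fun m => ?_
  rw [div_zpow, div_zpow, inv_zpow, inv_zpow, ← add_sub_cancel m n, add_sub_cancel_left,
    zpow_add₀ hx]
  ring

/- `d` is the coefficient at which the singular term of the Appell–Lerch sum is omitted. -/
lemma thetaAppellCoeff_succ (hb₁ : b₁ ≠ 0) (hb₂ : b₂ ≠ 0) {d : ℂ}
    (hd : ∀ l, appellCoeff p b₁ l * (1 - b₁ * p ^ l) =
      thetaCoeff p l * p ^ l - if l = 0 then d else 0) (n : ℤ) :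
    thetaAppellCoeff p b₁ b₂ (n + 1) = -(p ^ n * thetaAppellCoeff p b₁ b₂ n)
      - b₁⁻¹ * (p ^ n * thetaThetaCoeff p b₁ b₂ n)
      + b₁⁻¹ * d * (p ^ n * thetaCoeff p n * b₁⁻¹ ^ n) := by
  have hb₁' := inv_ne_zero hb₁
  have hθ₁ := summable_norm_thetaCoeff_mul_zpow hp hp1 hb₁'
  have hθ₂ := summable_norm_thetaCoeff_mul_zpow hp hp1 (inv_ne_zero hb₂)
  have hA := hasSum_conv_apply hθ₁
    (summable_norm_appellCoeff_mul_zpow hp hp1 (inv_ne_zero hb₂) hb₁) n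
  have hT := hasSum_conv_apply hθ₁ hθ₂ n
  have hS := hasSum_ite_eq n (b₁⁻¹ * d * (p ^ n * thetaCoeff p n * b₁⁻¹ ^ n))
  rw [thetaAppellCoeff, conv, ← (Equiv.addRight (1 : ℤ)).tsum_eq]
  refine ((((hA.mul_left (p ^ n)).neg.sub ((hT.mul_left (p ^ n)).mul_left b₁⁻¹)).add
    hS).congr_fun fun m => ?_).tsum_eq
  rw [Equiv.coe_addRight, add_sub_add_right_eq_sub, thetaCoeff_succ hp, zpow_add_one₀ hb₁']
  have hdm := hd (n - m)
  rcases eq_or_ne m n with rfl | hmn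
  · simp only [sub_self, zpow_zero, if_true, mul_one] at hdm ⊢
    linear_combination (-(thetaCoeff p m * p ^ m * b₁⁻¹ ^ m * b₁⁻¹)) * hdm
      - thetaCoeff p m * p ^ m * b₁⁻¹ ^ m * appellCoeff p b₁ 0 * mul_inv_cancel₀ hb₁
  · have hpow : p ^ n = p ^ m * p ^ (n - m) := by rw [← zpow_add₀ hp, add_sub_cancel]
    rw [if_neg (sub_ne_zero.2 hmn.symm)] at hdm
    rw [if_neg hmn, hpow]
    linear_combination (-(thetaCoeff p m * p ^ m * b₁⁻¹ ^ m * b₁⁻¹ * b₂⁻¹ ^ (n - m))) * hdm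
      - thetaCoeff p m * p ^ m * b₁⁻¹ ^ m * appellCoeff p b₁ (n - m) * b₂⁻¹ ^ (n - m)
        * p ^ (n - m) * mul_inv_cancel₀ hb₁

lemma thetaAppellCoeff_succ_of_ne (hb₁ : b₁ ≠ 0) (hb₂ : b₂ ≠ 0) (hb₁p : ∀ n : ℤ, b₁ * p ^ n ≠ 1)
    (n : ℤ) : thetaAppellCoeff p b₁ b₂ (n + 1) =
      -(p ^ n * thetaAppellCoeff p b₁ b₂ n) - b₁⁻¹ * (p ^ n * thetaThetaCoeff p b₁ b₂ n) := by
  have h := thetaAppellCoeff_succ hp hp1 hb₁ hb₂ (d := 0)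
    (fun l => by rw [ite_self, sub_zero, appellCoeff_mul hb₁p]) n
  rwa [mul_zero, zero_mul, add_zero] at h

/- The coefficients of the left-hand side, as a function of `a`, obey the recurrence of the theta
coefficients. The constant of proportionality is found at `a = b₂`. -/
lemma theta_mul_appell_sub_eq_mul_appell_one (ha : a ≠ 0) (hb₁ : b₁ ≠ 0) (hb₂ : b₂ ≠ 0)
    (hb₁p : ∀ n : ℤ, b₁ * p ^ n ≠ 1) (hb₂p : ∀ n : ℤ, b₂ * p ^ n ≠ 1) :
    theta p b₂ * (b₁ * (theta p (a / b₁) * appell p (a / b₂) b₁)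
        - b₂ * (theta p (a / b₂) * appell p (a / b₁) b₂))
      = b₁ * theta p (b₂ / b₁) * appell p 1 b₁ * theta p a := by
  set F : ℤ → ℂ := fun n =>
    b₁ * thetaAppellCoeff p b₁ b₂ n - b₂ * thetaAppellCoeff p b₂ b₁ n with hF
  have hrec (n : ℤ) : F (n + 1) = -(p ^ n * F n) := by
    simp only [hF]
    rw [thetaAppellCoeff_succ_of_ne hp hp1 hb₁ hb₂ hb₁p,
      thetaAppellCoeff_succ_of_ne hp hp1 hb₂ hb₁ hb₂p, thetaThetaCoeff_comm]
    field_simp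
    ring
  have hsum (c : ℂ) (hc : c ≠ 0) : b₁ * (theta p (c / b₁) * appell p (c / b₂) b₁)
      - b₂ * (theta p (c / b₂) * appell p (c / b₁) b₂) = F 0 * theta p c := by
    refine eq_mul_theta_of_hasSum hp hrec
      ((((hasSum_thetaAppellCoeff hp hp1 hb₁ hb₂ hc).mul_left b₁).sub
        ((hasSum_thetaAppellCoeff hp hp1 hb₂ hb₁ hc).mul_left b₂)).congr_fun fun n => ?_)
    simp only [hF]
    ring
  have hsum_b₂ := hsum b₂ hb₂
  rw [div_self hb₂, theta_one hp] at hsum_b₂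
  rw [hsum a ha]
  linear_combination (-theta p a) * hsum_b₂

/- The same argument for `b₁ = 1`, where `thetaDeriv` compensates for the omitted singular term. The
constant of proportionality is found at `a = b`. -/
lemma theta_mul_appell_one_add_thetaDeriv_sub (ha : a ≠ 0) (hb : b ≠ 0)
    (hbp : ∀ n : ℤ, b * p ^ n ≠ 1) :
    theta p b * (theta p a * appell p (a / b) 1 + thetaDeriv p a
        - b * (theta p (a / b) * appell p a b))
      = thetaDeriv p b * theta p a := by
  set F : ℤ → ℂ := fun n =>
    thetaAppellCoeff p 1 b n + n * thetaCoeff p n - b * thetaAppellCoeff p b 1 n with hF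
  have hrec (n : ℤ) : F (n + 1) = -(p ^ n * F n) := by
    simp only [hF]
    rw [thetaAppellCoeff_succ hp hp1 one_ne_zero hb (appellCoeff_one_mul hp1),
      thetaAppellCoeff_succ_of_ne hp hp1 hb one_ne_zero hbp, thetaThetaCoeff_comm p b,
      thetaCoeff_succ hp, inv_one, one_zpow, Int.cast_add, Int.cast_one]
    field_simp
    ring
  have hsum (c : ℂ) (hc : c ≠ 0) : theta p (c / 1) * appell p (c / b) 1 + thetaDeriv p c
      - b * (theta p (c / b) * appell p (c / 1) b) = F 0 * theta p c := by
    refine eq_mul_theta_of_hasSum hp hrec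
      ((((hasSum_thetaAppellCoeff hp hp1 one_ne_zero hb hc).add
        (summable_int_mul_thetaCoeff_mul_zpow hp hp1 hc).hasSum).sub
        ((hasSum_thetaAppellCoeff hp hp1 hb one_ne_zero hc).mul_left b)).congr_fun fun n => ?_)
    simp only [hF]
    ring
  have hsum_a := hsum a ha
  have hsum_b := hsum b hb
  rw [div_one] at hsum_a hsum_b
  rw [div_self hb, theta_one hp, appell_one_one hp] at hsum_b
  rw [hsum_a]
  linear_combination (-theta p a) * hsum_b

lemma theta_mul_appell_one_left (hb : b ≠ 0) (hbp : ∀ n : ℤ, b * p ^ n ≠ 1) (hθ : theta p b ≠ 0) :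
    theta p b * appell p 1 b = -thetaDeriv p 1 := by
  have h := theta_mul_appell_one_add_thetaDeriv_sub hp hp1 one_ne_zero hb hbp
  rw [theta_one hp, one_div, theta_inv hp hb] at h
  refine mul_left_cancel₀ hθ ?_
  field_simp at h
  linear_combination h

lemma theta_mul_appell_sub (hx : x ≠ 0) (hb₁ : b₁ ≠ 0) (hb₂ : b₂ ≠ 0)
    (hb₁p : ∀ n : ℤ, b₁ * p ^ n ≠ 1) (hb₂p : ∀ n : ℤ, b₂ * p ^ n ≠ 1) (hθ : theta p b₁ ≠ 0) :
    theta p b₁ * theta p b₂ * (b₁ * (theta p (x * b₂) * appell p (x * b₁) b₁)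
        - b₂ * (theta p (x * b₁) * appell p (x * b₂) b₂))
      = b₁ * -thetaDeriv p 1 * theta p (b₂ / b₁) * theta p (x * b₁ * b₂) := by
  have h := theta_mul_appell_sub_eq_mul_appell_one hp hp1
    (mul_ne_zero (mul_ne_zero hx hb₁) hb₂) hb₁ hb₂ hb₁p hb₂p
  rw [mul_div_cancel_right₀ _ hb₂, mul_right_comm x, mul_div_cancel_right₀ _ hb₁] at h
  rw [mul_right_comm x]
  linear_combination theta p b₁ * h + b₁ * theta p (b₂ / b₁) * theta p (x * b₂ * b₁) *
    theta_mul_appell_one_left hp hp1 hb₁ hb₁p hθ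

/- The Appell–Lerch sums cancel in a combination of three instances of `theta_mul_appell_sub`. -/
lemma theta_three_term (hx : x ≠ 0) (hb₁ : b₁ ≠ 0) (hb₂ : b₂ ≠ 0) (hb₃ : b₃ ≠ 0)
    (hb₁p : ∀ n : ℤ, b₁ * p ^ n ≠ 1) (hb₂p : ∀ n : ℤ, b₂ * p ^ n ≠ 1)
    (hb₃p : ∀ n : ℤ, b₃ * p ^ n ≠ 1) (hθ₁ : theta p b₁ ≠ 0) (hθ₂ : theta p b₂ ≠ 0) :
    thetaDeriv p 1 *
      (b₁ * theta p (b₂ / b₁) * theta p (x * b₁ * b₂) * theta p b₃ * theta p (x * b₃)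
      + b₂ * theta p (b₃ / b₂) * theta p (x * b₂ * b₃) * theta p b₁ * theta p (x * b₁)
      - b₁ * theta p (b₃ / b₁) * theta p (x * b₁ * b₃) * theta p b₂ * theta p (x * b₂)) = 0 := by
  have h₁₂ := theta_mul_appell_sub hp hp1 hx hb₁ hb₂ hb₁p hb₂p hθ₁
  have h₂₃ := theta_mul_appell_sub hp hp1 hx hb₂ hb₃ hb₂p hb₃p hθ₂
  have h₁₃ := theta_mul_appell_sub hp hp1 hx hb₁ hb₃ hb₁p hb₃p hθ₁
  linear_combination theta p b₃ * theta p (x * b₃) * h₁₂ + theta p b₁ * theta p (x * b₁) * h₂₃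
    - theta p b₂ * theta p (x * b₂) * h₁₃

/- The Appell–Lerch sums cancel between `theta_mul_appell_sub` and two instances of
`theta_mul_appell_one_add_thetaDeriv_sub`. -/
lemma theta_logDeriv_four_term (hx : x ≠ 0) (hb₁ : b₁ ≠ 0) (hb₂ : b₂ ≠ 0)
    (hb₁p : ∀ n : ℤ, b₁ * p ^ n ≠ 1) (hb₂p : ∀ n : ℤ, b₂ * p ^ n ≠ 1)
    (hθ₁ : theta p b₁ ≠ 0) (hθ₂ : theta p b₂ ≠ 0) (hxθ₁ : theta p (x * b₁) ≠ 0)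
    (hxθ₂ : theta p (x * b₂) ≠ 0) :
    thetaDeriv p b₁ / theta p b₁ - thetaDeriv p (x * b₁) / theta p (x * b₁)
        - thetaDeriv p b₂ / theta p b₂ + thetaDeriv p (x * b₂) / theta p (x * b₂)
      = b₁ * thetaDeriv p 1 * theta p x * theta p (b₂ / b₁) * theta p (x * b₁ * b₂) /
        (theta p (x * b₁) * theta p (x * b₂) * theta p b₁ * theta p b₂) := by
  have h₁ := theta_mul_appell_one_add_thetaDeriv_sub hp hp1 (mul_ne_zero hx hb₁) hb₁ hb₁p
  have h₂ := theta_mul_appell_one_add_thetaDeriv_sub hp hp1 (mul_ne_zero hx hb₂) hb₂ hb₂p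
  have h₁₂ := theta_mul_appell_sub hp hp1 hx hb₁ hb₂ hb₁p hb₂p hθ₁
  rw [mul_div_cancel_right₀ _ hb₁] at h₁
  rw [mul_div_cancel_right₀ _ hb₂] at h₂
  field_simp
  linear_combination (-(theta p b₂ * theta p (x * b₂))) * h₁
    + theta p b₁ * theta p (x * b₁) * h₂ - theta p x * h₁₂

end Products

/-! ### Specialization to powers of a fifth power -/

/-- The value of the theta function in base `Y⁵` at `s Yⁱ`. -/
noncomputable def thetaAt (Y s : ℂ) (i : ℤ) : ℂ := theta (Y ^ 5) (s * Y ^ i)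

/-- The value of `x d/dx theta` in base `Y⁵` at `s Yⁱ`. -/
noncomputable def thetaDerivAt (Y s : ℂ) (i : ℤ) : ℂ := thetaDeriv (Y ^ 5) (s * Y ^ i)

/-- The value of the Appell–Lerch sum in base `Y⁵` at `x = s Yⁱ` and `b = Yᶜ`. -/
noncomputable def appellAt (Y s : ℂ) (i c : ℤ) : ℂ := appell (Y ^ 5) (s * Y ^ i) (Y ^ c)

lemma tsum_ne_zero_of_norm_le_pow {f : ℕ → ℂ} {r : ℝ} (hr0 : 0 ≤ r) (hr : r < 1 / 2)
    (hf0 : f 0 = 1) (hf : ∀ n, ‖f n‖ ≤ r ^ n) : ∑' n, f n ≠ 0 := by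
  have hgeom := summable_geometric_of_lt_one hr0 (hr.trans (by norm_num))
  have hsum : Summable f := .of_norm_bounded hgeom hf
  have hle : ‖∑' n, f (n + 1)‖ ≤ r * (1 - r)⁻¹ := by
    rw [← tsum_geometric_of_lt_one hr0 (hr.trans (by norm_num)), ← tsum_mul_left]
    refine tsum_of_norm_bounded (hgeom.mul_left r).hasSum fun n => ?_
    rw [← pow_succ']
    exact hf (n + 1)
  intro h0
  rw [hsum.tsum_eq_zero_add, hf0, add_eq_zero_iff_eq_neg] at h0
  rw [← norm_neg, ← h0, norm_one, ← div_eq_mul_inv, le_div_iff₀ (by linarith)] at hle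
  linarith

lemma mul_zpow_neg_eq_inv {Y s : ℂ} (hs : s ^ 2 = 1) (i : ℤ) : s * Y ^ (-i) = (s * Y ^ i)⁻¹ := by
  rw [mul_inv, zpow_neg, ← eq_inv_of_mul_eq_one_left ((sq s).symm.trans hs)]

lemma norm_pow_five_lt_one {Y : ℂ} (hY1 : ‖Y‖ < 1) : ‖Y ^ 5‖ < 1 := by
  rw [norm_pow]
  exact pow_lt_one₀ (norm_nonneg _) hY1 (by norm_num)

section Specialization

variable {Y s : ℂ} (hY : Y ≠ 0)

include hY

lemma mul_zpow_add_five (s : ℂ) (i : ℤ) : s * Y ^ (i + 5) = Y ^ 5 * (s * Y ^ i) := by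
  rw [zpow_add₀ hY]
  norm_cast
  ring

lemma mul_zpow_ne_zero (hs : s ^ 2 = 1) (i : ℤ) : s * Y ^ i ≠ 0 :=
  mul_ne_zero (by rintro rfl; norm_num at hs) (zpow_ne_zero i hY)

lemma norm_thetaCoeff_mul_zpow (hs : s ^ 2 = 1) (i n : ℤ) :
    ‖thetaCoeff (Y ^ 5) n * (s * Y ^ i) ^ n‖ = ‖Y‖ ^ (5 * tri n + i * n) := by
  have hs1 : ‖s‖ = 1 := by
    rw [← pow_eq_one_iff_of_nonneg (norm_nonneg s) two_ne_zero, ← norm_pow, hs, norm_one]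
  rw [thetaCoeff, norm_mul, norm_mul, norm_zpow, norm_neg, norm_one, one_zpow, one_mul, norm_zpow,
    norm_zpow, norm_mul, hs1, one_mul, norm_pow, norm_zpow, zpow_add₀ (norm_ne_zero_iff.2 hY),
    zpow_mul, zpow_mul]
  norm_cast

lemma thetaAt_neg (hs : s ^ 2 = 1) (i : ℤ) :
    thetaAt Y s (-i) = -(s * Y ^ i)⁻¹ * thetaAt Y s i := by
  rw [thetaAt, mul_zpow_neg_eq_inv hs, theta_inv (pow_ne_zero 5 hY) (mul_zpow_ne_zero hY hs i),
    thetaAt]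

lemma thetaAt_add_five (hs : s ^ 2 = 1) (i : ℤ) :
    thetaAt Y s (i + 5) = -(s * Y ^ i)⁻¹ * thetaAt Y s i := by
  rw [thetaAt, mul_zpow_add_five hY, theta_mul (pow_ne_zero 5 hY) (mul_zpow_ne_zero hY hs i),
    thetaAt]

lemma thetaAt_five_sub (hs : s ^ 2 = 1) (i : ℤ) : thetaAt Y s (5 - i) = thetaAt Y s i := by
  have hne := mul_zpow_ne_zero hY hs i
  rw [sub_eq_neg_add, thetaAt_add_five hY hs, thetaAt_neg hY hs, mul_zpow_neg_eq_inv hs,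
    neg_mul, neg_mul, mul_neg, neg_neg, inv_inv, mul_inv_cancel_left₀ hne]

variable (hY1 : ‖Y‖ < 1)

include hY1

lemma zpow_mul_pow_five_zpow_ne_one {c : ℤ} (hc : ¬ 5 ∣ c) (n : ℤ) : Y ^ c * (Y ^ 5) ^ n ≠ 1 := by
  rw [← zpow_natCast, ← zpow_mul, ← zpow_add₀ hY]
  exact zpow_ne_one hY1 (by push_cast; omega)

lemma thetaDerivAt_neg (hs : s ^ 2 = 1) (i : ℤ) :
    thetaDerivAt Y s (-i) = (s * Y ^ i)⁻¹ * (thetaDerivAt Y s i - thetaAt Y s i) := by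
  rw [thetaDerivAt, mul_zpow_neg_eq_inv hs, thetaDeriv_inv (pow_ne_zero 5 hY)
    (norm_pow_five_lt_one hY1) (mul_zpow_ne_zero hY hs i), thetaDerivAt, thetaAt]

lemma thetaDerivAt_five_sub (hs : s ^ 2 = 1) (i : ℤ) :
    thetaDerivAt Y s (5 - i) = -thetaDerivAt Y s i := by
  have hne := mul_zpow_ne_zero hY hs i
  rw [sub_eq_neg_add, thetaDerivAt, mul_zpow_add_five hY, thetaDeriv_mul (pow_ne_zero 5 hY)
    (norm_pow_five_lt_one hY1) (mul_zpow_ne_zero hY hs _), ← thetaDerivAt, ← thetaAt,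
    thetaDerivAt_neg hY hY1 hs, thetaAt_neg hY hs, mul_zpow_neg_eq_inv hs, inv_inv]
  linear_combination (-thetaDerivAt Y s i) * mul_inv_cancel₀ hne

end Specialization

section NonVanishing

variable {Y s : ℂ} (hY : Y ≠ 0) (hY1 : ‖Y‖ < 1 / 2)

include hY hY1

/- Listing the indices as `0, 1, -1, 2, -2, …`, the `k`-th term is at most `‖Y‖ᵏ`. -/
lemma thetaAt_ne_zero_of_eq_one_or_two (hs : s ^ 2 = 1) {i : ℤ} (hi : i = 1 ∨ i = 2) :
    thetaAt Y s i ≠ 0 := by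
  let e : ℤ ≃ ℕ := (Equiv.neg ℤ).trans Equiv.intEquivNat
  rw [thetaAt, theta, ← e.symm.tsum_eq]
  refine tsum_ne_zero_of_norm_le_pow (norm_nonneg Y) hY1 ?_ fun k => ?_
  · rw [show e.symm 0 = 0 from rfl, thetaCoeff_zero, zpow_zero, mul_one]
  obtain ⟨n, rfl⟩ := e.surjective k
  rw [e.symm_apply_apply, norm_thetaCoeff_mul_zpow hY hs, ← zpow_natCast]
  refine zpow_le_zpow_right_of_le_one₀ (norm_pos_iff.2 hY) (by linarith) ?_
  have htri := two_mul_tri n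
  obtain ⟨m, rfl⟩ : ∃ m, n = -m := ⟨-n, (neg_neg n).symm⟩
  have he : e (-m) = Equiv.intEquivNat m := congrArg Equiv.intEquivNat (neg_neg m)
  rcases m with a | a
  · have hk : Equiv.intEquivNat (Int.ofNat a) = 2 * a := rfl
    rw [Int.ofNat_eq_natCast] at *
    rw [he, hk]
    have hsq := Int.le_self_sq a
    rcases hi with rfl | rfl <;> push_cast <;> nlinarith
  · have hk : Equiv.intEquivNat (Int.negSucc a) = 2 * a + 1 := rfl
    rw [he, hk]
    rw [Int.neg_negSucc] at htri ⊢
    push_cast at htri ⊢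
    rcases hi with rfl | rfl <;> nlinarith

lemma thetaAt_ne_zero (hs : s ^ 2 = 1) {i : ℤ} (hi : ¬ 5 ∣ i) : thetaAt Y s i ≠ 0 := by
  have hper : Function.Periodic (fun j => thetaAt Y s j = 0) 5 := fun j => by
    beta_reduce
    rw [thetaAt_add_five hY hs, mul_eq_zero,
      or_iff_right (neg_ne_zero.2 (inv_ne_zero (mul_zpow_ne_zero hY hs j)))]
  have hone : thetaAt Y s 1 ≠ 0 := thetaAt_ne_zero_of_eq_one_or_two hY hY1 hs (.inl rfl)
  have htwo : thetaAt Y s 2 ≠ 0 := thetaAt_ne_zero_of_eq_one_or_two hY hY1 hs (.inr rfl)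
  have hmod : thetaAt Y s (i % 5) ≠ 0 := by
    have hcases : i % 5 = 1 ∨ i % 5 = 2 ∨ i % 5 = 5 - 2 ∨ i % 5 = 5 - 1 := by omega
    rcases hcases with h | h | h | h <;> rw [h] <;> simpa only [thetaAt_five_sub hY hs]
  rw [Int.emod_def, mul_comm] at hmod
  exact mt (hper.sub_int_mul_eq (i / 5)).mpr hmod

end NonVanishing

lemma tsum_int_eq_sum_tsum {f : ℤ → ℂ} (hf : Summable f) (N : ℕ) [NeZero N] (a : ℤ) :
    ∑' n, f n = ∑ k : Fin N, ∑' m : ℤ, f (m * N + k + a) := by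
  let e : Fin N × ℤ ≃ ℤ :=
    (Equiv.prodComm _ _).trans ((Int.divModEquiv N).symm.trans (Equiv.addRight a))
  rw [← e.tsum_eq]
  refine (e.summable_iff.2 hf).tsum_prod.trans ?_
  rw [tsum_fintype]
  rfl

lemma thetaCoeff_mul_neg_one_zpow (p : ℂ) (n : ℤ) : thetaCoeff p n * (-1) ^ n = p ^ tri n := by
  rw [thetaCoeff, mul_right_comm, ← mul_zpow, neg_one_mul, neg_neg, one_zpow, one_mul]

lemma summable_zpow_tri {p : ℂ} (hp : p ≠ 0) (hp1 : ‖p‖ < 1) : Summable fun n : ℤ => p ^ tri n :=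
  (summable_thetaCoeff_mul_zpow hp hp1 (neg_ne_zero.2 one_ne_zero)).congr
    (thetaCoeff_mul_neg_one_zpow p)

lemma tsum_zpow_tri {p : ℂ} (hp : p ≠ 0) (hp1 : ‖p‖ < 1) : ∑' n : ℤ, p ^ tri n = 2 * psi p := by
  have heven (m : ℤ) : tri (m * 2) = m * (2 * m - 1) := by linarith [two_mul_tri (m * 2)]
  have hodd (m : ℤ) : tri (-m * 2 + 1) = m * (2 * m - 1) := by linarith [two_mul_tri (-m * 2 + 1)]
  rw [tsum_int_eq_sum_tsum (summable_zpow_tri hp hp1) 2 0, Fin.sum_univ_two, two_mul, psi]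
  congr 1
  · exact tsum_congr fun m => by simp [heven]
  · rw [← (Equiv.neg ℤ).tsum_eq]
    exact tsum_congr fun m => by simp [← hodd]

lemma theta_neg_one {p : ℂ} (hp : p ≠ 0) (hp1 : ‖p‖ < 1) : theta p (-1) = 2 * psi p := by
  rw [← tsum_zpow_tri hp hp1, theta]
  exact tsum_congr (thetaCoeff_mul_neg_one_zpow p)

/-! ### Relations between the values in base `Y⁵` -/

section Relations

variable {Y : ℂ} (hY : Y ≠ 0) (hY1 : ‖Y‖ < 1 / 2)

include hY hY1

lemma theta_zpow_ne_zero {i : ℤ} (hi : ¬ 5 ∣ i) : theta (Y ^ 5) (Y ^ i) ≠ 0 := by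
  simpa [thetaAt] using thetaAt_ne_zero hY hY1 (one_pow 2) hi

lemma appellAt_zero_left {c : ℤ} (hc : ¬ 5 ∣ c) :
    thetaAt Y 1 c * appellAt Y 1 0 c = -thetaDerivAt Y 1 0 := by
  have hY1' : ‖Y‖ < 1 := hY1.trans (by norm_num)
  simpa [thetaAt, thetaDerivAt, appellAt] using
    theta_mul_appell_one_left (pow_ne_zero 5 hY) (norm_pow_five_lt_one hY1') (zpow_ne_zero c hY)
      (zpow_mul_pow_five_zpow_ne_one hY hY1' hc) (theta_zpow_ne_zero hY hY1 hc)

lemma appellAt_zero_right {s : ℂ} (hs : s ^ 2 = 1) (e : ℤ) {c : ℤ} (hc : ¬ 5 ∣ c) :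
    thetaAt Y 1 c * (thetaAt Y s (e + c) * appellAt Y s e 0 + thetaDerivAt Y s (e + c)
      - Y ^ c * (thetaAt Y s e * appellAt Y s (e + c) c))
      = thetaDerivAt Y 1 c * thetaAt Y s (e + c) := by
  have hY1' : ‖Y‖ < 1 := hY1.trans (by norm_num)
  have hdiv : s * Y ^ (e + c) / Y ^ c = s * Y ^ e := by
    rw [zpow_add₀ hY, ← mul_assoc, mul_div_cancel_right₀ _ (zpow_ne_zero c hY)]
  have h := theta_mul_appell_one_add_thetaDeriv_sub (pow_ne_zero 5 hY)
    (norm_pow_five_lt_one hY1') (mul_zpow_ne_zero hY hs (e + c)) (zpow_ne_zero c hY)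
    (zpow_mul_pow_five_zpow_ne_one hY hY1' hc)
  rw [hdiv] at h
  simpa only [thetaAt, thetaDerivAt, appellAt, one_mul, zpow_zero] using h

lemma appellAt_sub {s : ℂ} (hs : s ^ 2 = 1) (e : ℤ) {c₁ c₂ : ℤ} (hc₁ : ¬ 5 ∣ c₁)
    (hc₂ : ¬ 5 ∣ c₂) :
    thetaAt Y 1 c₁ * thetaAt Y 1 c₂ * (Y ^ c₁ * (thetaAt Y s (e + c₂) * appellAt Y s (e + c₁) c₁)
      - Y ^ c₂ * (thetaAt Y s (e + c₁) * appellAt Y s (e + c₂) c₂))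
      = Y ^ c₁ * -thetaDerivAt Y 1 0 * thetaAt Y 1 (c₂ - c₁) * thetaAt Y s (e + c₁ + c₂) := by
  have hY1' : ‖Y‖ < 1 := hY1.trans (by norm_num)
  have h := theta_mul_appell_sub (pow_ne_zero 5 hY) (norm_pow_five_lt_one hY1')
    (mul_zpow_ne_zero hY hs e) (zpow_ne_zero c₁ hY) (zpow_ne_zero c₂ hY)
    (zpow_mul_pow_five_zpow_ne_one hY hY1' hc₁) (zpow_mul_pow_five_zpow_ne_one hY hY1' hc₂)
    (theta_zpow_ne_zero hY hY1 hc₁)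
  simpa only [thetaAt, thetaDerivAt, appellAt, one_mul, zpow_add₀ hY, zpow_sub₀ hY, zpow_zero,
    mul_assoc] using h

lemma thetaAt_three_term {s : ℂ} (hs : s ^ 2 = 1) (e : ℤ) {c₁ c₂ c₃ : ℤ} (hc₁ : ¬ 5 ∣ c₁)
    (hc₂ : ¬ 5 ∣ c₂) (hc₃ : ¬ 5 ∣ c₃) :
    thetaDerivAt Y 1 0 *
      (Y ^ c₁ * thetaAt Y 1 (c₂ - c₁) * thetaAt Y s (e + c₁ + c₂) * thetaAt Y 1 c₃
          * thetaAt Y s (e + c₃)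
        + Y ^ c₂ * thetaAt Y 1 (c₃ - c₂) * thetaAt Y s (e + c₂ + c₃) * thetaAt Y 1 c₁
          * thetaAt Y s (e + c₁)
        - Y ^ c₁ * thetaAt Y 1 (c₃ - c₁) * thetaAt Y s (e + c₁ + c₃) * thetaAt Y 1 c₂
          * thetaAt Y s (e + c₂)) = 0 := by
  have hY1' : ‖Y‖ < 1 := hY1.trans (by norm_num)
  have h := theta_three_term (pow_ne_zero 5 hY) (norm_pow_five_lt_one hY1')
    (mul_zpow_ne_zero hY hs e) (zpow_ne_zero c₁ hY) (zpow_ne_zero c₂ hY) (zpow_ne_zero c₃ hY)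
    (zpow_mul_pow_five_zpow_ne_one hY hY1' hc₁) (zpow_mul_pow_five_zpow_ne_one hY hY1' hc₂)
    (zpow_mul_pow_five_zpow_ne_one hY hY1' hc₃) (theta_zpow_ne_zero hY hY1 hc₁)
    (theta_zpow_ne_zero hY hY1 hc₂)
  simpa only [thetaAt, thetaDerivAt, one_mul, zpow_add₀ hY, zpow_sub₀ hY, zpow_zero, mul_assoc]
    using h

lemma thetaAt_logDeriv_four_term (e : ℤ) {c₁ c₂ : ℤ} (hc₁ : ¬ 5 ∣ c₁) (hc₂ : ¬ 5 ∣ c₂)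
    (hec₁ : ¬ 5 ∣ e + c₁) (hec₂ : ¬ 5 ∣ e + c₂) :
    thetaDerivAt Y 1 c₁ / thetaAt Y 1 c₁ - thetaDerivAt Y 1 (e + c₁) / thetaAt Y 1 (e + c₁)
      - thetaDerivAt Y 1 c₂ / thetaAt Y 1 c₂ + thetaDerivAt Y 1 (e + c₂) / thetaAt Y 1 (e + c₂)
      = Y ^ c₁ * thetaDerivAt Y 1 0 * thetaAt Y 1 e * thetaAt Y 1 (c₂ - c₁)
          * thetaAt Y 1 (e + c₁ + c₂)
        / (thetaAt Y 1 (e + c₁) * thetaAt Y 1 (e + c₂) * thetaAt Y 1 c₁ * thetaAt Y 1 c₂) := by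
  have hY1' : ‖Y‖ < 1 := hY1.trans (by norm_num)
  have h := theta_logDeriv_four_term (pow_ne_zero 5 hY) (norm_pow_five_lt_one hY1')
    (zpow_ne_zero e hY) (zpow_ne_zero c₁ hY) (zpow_ne_zero c₂ hY)
    (zpow_mul_pow_five_zpow_ne_one hY hY1' hc₁) (zpow_mul_pow_five_zpow_ne_one hY hY1' hc₂)
    (theta_zpow_ne_zero hY hY1 hc₁) (theta_zpow_ne_zero hY hY1 hc₂)
    (by rw [← zpow_add₀ hY]; exact theta_zpow_ne_zero hY hY1 hec₁)
    (by rw [← zpow_add₀ hY]; exact theta_zpow_ne_zero hY hY1 hec₂)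
  simpa only [thetaAt, thetaDerivAt, one_mul, zpow_add₀ hY, zpow_sub₀ hY, zpow_zero] using h

end Relations

section Values

variable {Y s : ℂ} (hY : Y ≠ 0)

include hY

/- Quasi-periodicity and inversion reduce every index to one of `0`, `1` and `2`. -/
lemma thetaAt_values (hs : s ^ 2 = 1) :
    (∀ i, thetaAt Y s (-i) = -(s * Y ^ i)⁻¹ * thetaAt Y s i) ∧
    thetaAt Y s 3 = thetaAt Y s 2 ∧ thetaAt Y s 4 = thetaAt Y s 1 ∧
    thetaAt Y s 5 = thetaAt Y s 0 ∧ thetaAt Y s 6 = thetaAt Y s (-1) := by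
  have hsub := thetaAt_five_sub hY hs
  exact ⟨thetaAt_neg hY hs, by simpa using hsub 2, by simpa using hsub 1, by simpa using hsub 0,
    by simpa using hsub (-1)⟩

lemma thetaDerivAt_values (hY1 : ‖Y‖ < 1) (hs : s ^ 2 = 1) :
    (∀ i, thetaDerivAt Y s (-i) = (s * Y ^ i)⁻¹ * (thetaDerivAt Y s i - thetaAt Y s i)) ∧
    thetaDerivAt Y s 3 = -thetaDerivAt Y s 2 ∧ thetaDerivAt Y s 4 = -thetaDerivAt Y s 1 ∧
    thetaDerivAt Y s 6 = -thetaDerivAt Y s (-1) := by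
  have hsub := thetaDerivAt_five_sub hY hY1 hs
  exact ⟨thetaDerivAt_neg hY hY1 hs, by simpa using hsub 2, by simpa using hsub 1,
    by simpa using hsub (-1)⟩

lemma thetaAt_neg_one_zero (hY1 : ‖Y‖ < 1) : thetaAt Y (-1) 0 = 2 * psi (Y ^ 5) := by
  rw [thetaAt, zpow_zero, mul_one, theta_neg_one (pow_ne_zero 5 hY) (norm_pow_five_lt_one hY1)]

lemma thetaDerivAt_neg_one_zero (hY1 : ‖Y‖ < 1) : thetaDerivAt Y (-1) 0 = psi (Y ^ 5) := by
  have h := thetaDerivAt_neg hY hY1 neg_one_sq 0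
  rw [neg_zero, zpow_zero, thetaAt_neg_one_zero hY hY1] at h
  norm_num at h
  linear_combination h / 2

lemma psi_pow_five_ne_zero (hY1 : ‖Y‖ < 1 / 2) : psi (Y ^ 5) ≠ 0 := by
  refine psi_ne_zero ?_ (pow_ne_zero 5 hY)
  rw [norm_pow]
  exact (pow_le_of_le_one (norm_nonneg _) (by linarith) (by norm_num)).trans_lt hY1

end Values

/-! ### The five components of the quotient -/

/-- The series `1 + ∑ Q^(i(2i-1)) (2 Q^(2i) + Q^(4i)) / (1 - Q^(10i))`, whose quotient by `psi Q`
generates `N₂(0,5,n) - N₂(2,5,n)` at `-Q`. The term `i = 0` of the sum is zero, by division by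
zero. -/
noncomputable def rankDiffLambert (Q : ℂ) : ℂ :=
  1 + ∑' i : ℤ, Q ^ (i * (2 * i - 1)) * (2 * Q ^ (2 * i) + Q ^ (4 * i)) / (1 - Q ^ (10 * i))

section Components

variable {Y : ℂ} (hY : Y ≠ 0) (hY1 : ‖Y‖ < 1 / 2)

local notation "θ₁" => thetaAt Y 1 1
local notation "θ₂" => thetaAt Y 1 2
local notation "ϑ₁" => thetaAt Y (-1) 1
local notation "ϑ₂" => thetaAt Y (-1) 2
local notation "ψ" => psi (Y ^ 5)
local notation "κ" => (-thetaDerivAt Y 1 0)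

variable (Y) in
/-- The five components, with respect to the residue of the exponent modulo 5, of the quotient
`rankDiffLambert Q / psi Q`, written as functions of `Y = Q⁵`. -/
noncomputable def rankDiffPart : Fin 5 → ℂ :=
  ![(appellAt Y (-1) 0 2 + κ / θ₂ - κ * ψ * θ₂ / (ϑ₁ * θ₁ ^ 2)) / ψ,
    -κ / (ϑ₁ * θ₁),
    κ * ψ * θ₂ / (ϑ₁ ^ 2 * θ₁ ^ 2),
    0,
    (appellAt Y (-1) 0 1 / 2 + κ / (2 * θ₁) - κ * ϑ₂ * ψ * θ₂ / (ϑ₁ ^ 2 * θ₁ ^ 2)) / (ψ * Y)]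

include hY hY1

lemma thetaDerivAt_mul_quartic_one :
    κ * (ϑ₂ * ϑ₁ * θ₂ ^ 2 - ϑ₂ ^ 2 * θ₁ * θ₂ - 2 * Y * ψ * ϑ₁ * θ₁ ^ 2) = 0 := by
  have h := thetaAt_three_term hY hY1 neg_one_sq (-3) (c₁ := 1) (c₂ := 2) (c₃ := 4)
    (by decide) (by decide) (by decide)
  simp only [Int.reduceAdd, Int.reduceSub, Int.reduceNeg, thetaAt_values hY (one_pow 2),
    thetaAt_values hY neg_one_sq, thetaAt_neg_one_zero hY (hY1.trans (by norm_num))] at h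
  linear_combination (norm := (field_simp; ring)) h

lemma thetaDerivAt_mul_quartic_two :
    κ * (ϑ₂ * ϑ₁ * θ₁ ^ 2 + ϑ₁ ^ 2 * θ₁ * θ₂ - 2 * ψ * ϑ₂ * θ₂ ^ 2) = 0 := by
  have h := thetaAt_three_term hY hY1 neg_one_sq (-2) (c₁ := 1) (c₂ := 2) (c₃ := 3)
    (by decide) (by decide) (by decide)
  simp only [Int.reduceAdd, Int.reduceSub, Int.reduceNeg, thetaAt_values hY (one_pow 2),
    thetaAt_values hY neg_one_sq, thetaAt_neg_one_zero hY (hY1.trans (by norm_num))] at h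
  linear_combination (norm := (field_simp; ring)) -h / Y

lemma thetaDerivAt_mul_quartic_three :
    κ * (ϑ₁ ^ 2 * θ₂ ^ 2 - ϑ₂ ^ 2 * θ₁ ^ 2 - 4 * Y * ψ ^ 2 * θ₁ * θ₂) = 0 := by
  have h := thetaAt_three_term hY hY1 neg_one_sq (-3) (c₁ := 1) (c₂ := 2) (c₃ := 3)
    (by decide) (by decide) (by decide)
  simp only [Int.reduceAdd, Int.reduceSub, Int.reduceNeg, thetaAt_values hY (one_pow 2),
    thetaAt_values hY neg_one_sq, thetaAt_neg_one_zero hY (hY1.trans (by norm_num))] at h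
  linear_combination (norm := (field_simp; ring)) h

lemma logDeriv_three_one_add_two :
    3 * thetaDerivAt Y 1 1 / θ₁ + thetaDerivAt Y 1 2 / θ₂ - 1 = -κ * θ₂ ^ 2 / θ₁ ^ 3 := by
  have hθ₁ : θ₁ ≠ 0 := thetaAt_ne_zero hY hY1 (one_pow 2) (by decide)
  have hθ₂ : θ₂ ≠ 0 := thetaAt_ne_zero hY hY1 (one_pow 2) (by decide)
  have h := thetaAt_logDeriv_four_term hY hY1 (-2) (c₁ := 1) (c₂ := 4) (by decide) (by decide)
    (by decide) (by decide)
  simp only [Int.reduceAdd, Int.reduceSub, Int.reduceNeg, thetaAt_values hY (one_pow 2),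
    thetaDerivAt_values hY (hY1.trans (by norm_num)) (one_pow 2)] at h
  linear_combination (norm := (field_simp; ring)) h

lemma logDeriv_three_two_sub_one :
    3 * thetaDerivAt Y 1 2 / θ₂ - thetaDerivAt Y 1 1 / θ₁ = κ * Y * θ₁ ^ 2 / θ₂ ^ 3 := by
  have hθ₁ : θ₁ ≠ 0 := thetaAt_ne_zero hY hY1 (one_pow 2) (by decide)
  have hθ₂ : θ₂ ≠ 0 := thetaAt_ne_zero hY hY1 (one_pow 2) (by decide)
  have h := thetaAt_logDeriv_four_term hY hY1 (-4) (c₁ := 2) (c₂ := 6) (by decide) (by decide)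
    (by decide) (by decide)
  simp only [Int.reduceAdd, Int.reduceSub, Int.reduceNeg, thetaAt_values hY (one_pow 2),
    thetaDerivAt_values hY (hY1.trans (by norm_num)) (one_pow 2)] at h
  linear_combination (norm := (field_simp; ring)) h

lemma appellAt_component_zero :
    1 + appellAt Y (-1) (-2) 0 + appellAt Y 1 (-2) 0
      + (appellAt Y (-1) (-1) 0 + appellAt Y 1 (-1) 0) / 2 + appellAt Y (-1) (-3) (-1)
      - appellAt Y 1 (-3) (-1) + Y / 2 * (appellAt Y (-1) 1 2 + appellAt Y 1 1 2)
      = ϑ₂ * rankDiffPart Y 0 + Y * ψ * rankDiffPart Y 2 + Y * ϑ₁ * rankDiffPart Y 4 := by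
  have hθ₁ : θ₁ ≠ 0 := thetaAt_ne_zero hY hY1 (one_pow 2) (by decide)
  have hθ₂ : θ₂ ≠ 0 := thetaAt_ne_zero hY hY1 (one_pow 2) (by decide)
  have hϑ₁ : ϑ₁ ≠ 0 := thetaAt_ne_zero hY hY1 neg_one_sq (by decide)
  have hψ : ψ ≠ 0 := psi_pow_five_ne_zero hY hY1
  have h₁ := appellAt_zero_right hY hY1 neg_one_sq (-2) (c := 2) (by decide)
  have h₂ := appellAt_zero_right hY hY1 (one_pow 2) (-2) (c := -1) (by decide)
  have h₃ := appellAt_zero_right hY hY1 neg_one_sq (-1) (c := 1) (by decide)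
  have h₄ := appellAt_zero_right hY hY1 (one_pow 2) (-1) (c := 2) (by decide)
  have h₅ := appellAt_sub hY hY1 neg_one_sq (-2) (c₁ := -1) (c₂ := 2) (by decide) (by decide)
  have h₆ := appellAt_sub hY hY1 neg_one_sq (-1) (c₁ := 2) (c₂ := 1) (by decide) (by decide)
  have hY1' : ‖Y‖ < 1 := hY1.trans (by norm_num)
  simp only [Int.reduceAdd, Int.reduceSub, Int.reduceNeg, thetaAt_values hY (one_pow 2),
    thetaAt_values hY neg_one_sq, thetaAt_neg_one_zero hY hY1', thetaDerivAt_neg_one_zero hY hY1',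
    thetaDerivAt_values hY hY1' (one_pow 2)] at h₁ h₂ h₃ h₄ h₅ h₆
  simp only [rankDiffPart, Matrix.cons_val]
  linear_combination (norm := (field_simp; ring)) h₁ / (2 * ψ * θ₂) + Y ^ 4 / (θ₁ * θ₂) * h₂
    + h₃ / (4 * ψ * θ₁) + h₄ / (2 * θ₁ * θ₂) - Y ^ 2 / (2 * ψ * θ₁ * θ₂) * h₅
    + h₆ / (4 * ψ * θ₁ * θ₂ * Y)
    + (logDeriv_three_two_sub_one hY hY1 - logDeriv_three_one_add_two hY hY1) / 4
    - ((ϑ₁ * θ₁ ^ 3 / 2) * thetaDerivAt_mul_quartic_one hY hY1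
      - ψ * θ₂ ^ 3 * thetaDerivAt_mul_quartic_three hY hY1
      + (4 * ϑ₁ * θ₂ ^ 2 * θ₁ + ϑ₂ * θ₂ * θ₁ ^ 2 / 2) * thetaDerivAt_mul_quartic_two hY hY1)
      / (4 * ψ * θ₂ ^ 3 * θ₁ ^ 3 * ϑ₁ ^ 2)

lemma appellAt_component_one :
    appellAt Y (-1) (-1) 1 - appellAt Y 1 (-1) 1 + appellAt Y (-1) (-4) (-2)
      + appellAt Y 1 (-4) (-2) = ϑ₂ * rankDiffPart Y 1 + ϑ₁ * rankDiffPart Y 0 := by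
  have hθ₁ : θ₁ ≠ 0 := thetaAt_ne_zero hY hY1 (one_pow 2) (by decide)
  have hθ₂ : θ₂ ≠ 0 := thetaAt_ne_zero hY hY1 (one_pow 2) (by decide)
  have hϑ₁ : ϑ₁ ≠ 0 := thetaAt_ne_zero hY hY1 neg_one_sq (by decide)
  have hψ : ψ ≠ 0 := psi_pow_five_ne_zero hY hY1
  have h₁ := appellAt_sub hY hY1 neg_one_sq (-2) (c₁ := 1) (c₂ := 2) (by decide) (by decide)
  have h₂ := appellAt_sub hY hY1 neg_one_sq (-2) (c₁ := -2) (c₂ := 2) (by decide) (by decide)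
  have h₃ := appellAt_sub hY hY1 (one_pow 2) (-2) (c₁ := 1) (c₂ := -2) (by decide) (by decide)
  simp only [Int.reduceAdd, Int.reduceSub, Int.reduceNeg, thetaAt_values hY (one_pow 2),
    thetaAt_values hY neg_one_sq, thetaAt_neg_one_zero hY (hY1.trans (by norm_num))] at h₁ h₂ h₃
  simp only [rankDiffPart, Matrix.cons_val]
  linear_combination (norm := (field_simp; ring)) h₁ / (2 * ψ * Y * θ₁ * θ₂)
    - Y ^ 4 / (2 * ψ * θ₂ ^ 2) * h₂ - Y ^ 5 / (θ₁ ^ 2 * θ₂) * h₃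
    - thetaDerivAt_mul_quartic_two hY hY1 / (2 * ψ * θ₂ ^ 2 * ϑ₁ * θ₁)

lemma appellAt_component_two :
    (appellAt Y (-1) 0 1 - appellAt Y 1 0 1) / 2
      = ϑ₂ * rankDiffPart Y 2 + ϑ₁ * rankDiffPart Y 1 + Y * ψ * rankDiffPart Y 4 := by
  have hθ₁ : θ₁ ≠ 0 := thetaAt_ne_zero hY hY1 (one_pow 2) (by decide)
  have hϑ₁ : ϑ₁ ≠ 0 := thetaAt_ne_zero hY hY1 neg_one_sq (by decide)
  have hψ : ψ ≠ 0 := psi_pow_five_ne_zero hY hY1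
  have h := appellAt_zero_left hY hY1 (c := 1) (by decide)
  simp only [rankDiffPart, Matrix.cons_val]
  linear_combination (norm := (field_simp; ring)) -h / (2 * θ₁)

lemma appellAt_component_three :
    appellAt Y (-1) 0 2 + appellAt Y 1 0 2 = ϑ₁ * rankDiffPart Y 2 + ψ * rankDiffPart Y 0 := by
  have hθ₁ : θ₁ ≠ 0 := thetaAt_ne_zero hY hY1 (one_pow 2) (by decide)
  have hθ₂ : θ₂ ≠ 0 := thetaAt_ne_zero hY hY1 (one_pow 2) (by decide)
  have hϑ₁ : ϑ₁ ≠ 0 := thetaAt_ne_zero hY hY1 neg_one_sq (by decide)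
  have hψ : ψ ≠ 0 := psi_pow_five_ne_zero hY hY1
  have h := appellAt_zero_left hY hY1 (c := 2) (by decide)
  simp only [rankDiffPart, Matrix.cons_val]
  linear_combination (norm := (field_simp; ring)) h / θ₂

lemma appellAt_component_four :
    (appellAt Y (-1) (-2) (-1) - appellAt Y 1 (-2) (-1) + appellAt Y (-1) (-3) (-2)
      + appellAt Y 1 (-3) (-2)) / (2 * Y) = ϑ₂ * rankDiffPart Y 4 + ψ * rankDiffPart Y 1 := by
  have hθ₁ : θ₁ ≠ 0 := thetaAt_ne_zero hY hY1 (one_pow 2) (by decide)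
  have hθ₂ : θ₂ ≠ 0 := thetaAt_ne_zero hY hY1 (one_pow 2) (by decide)
  have hϑ₁ : ϑ₁ ≠ 0 := thetaAt_ne_zero hY hY1 neg_one_sq (by decide)
  have hψ : ψ ≠ 0 := psi_pow_five_ne_zero hY hY1
  have h₁ := appellAt_sub hY hY1 neg_one_sq (-1) (c₁ := -1) (c₂ := 1) (by decide) (by decide)
  have h₂ := appellAt_sub hY hY1 neg_one_sq (-1) (c₁ := -2) (c₂ := 1) (by decide) (by decide)
  have h₃ := appellAt_sub hY hY1 (one_pow 2) (-1) (c₁ := -1) (c₂ := -2) (by decide) (by decide)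
  simp only [Int.reduceAdd, Int.reduceSub, Int.reduceNeg, thetaAt_values hY (one_pow 2),
    thetaAt_values hY neg_one_sq, thetaAt_neg_one_zero hY (hY1.trans (by norm_num))] at h₁ h₂ h₃
  simp only [rankDiffPart, Matrix.cons_val]
  linear_combination (norm := (field_simp; ring)) -Y / (4 * ψ * θ₁ ^ 2) * h₁
    - Y ^ 3 / (4 * ψ * θ₁ * θ₂) * h₂ + Y ^ 6 / (2 * θ₁ * θ₂ ^ 2) * h₃
    - (θ₁ * ϑ₁ * thetaDerivAt_mul_quartic_one hY hY1
      + 2 * ϑ₂ * θ₂ * thetaDerivAt_mul_quartic_two hY hY1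
      + ϑ₁ * θ₂ * thetaDerivAt_mul_quartic_three hY hY1)
      / (4 * Y * ψ * θ₁ ^ 2 * θ₂ ^ 2 * ϑ₁ ^ 2)

end Components

/-! ### Five-dissection -/

lemma tri_mul_five_add (m c : ℤ) : tri (m * 5 + c) = 25 * tri m + 5 * ((2 + c) * m) + tri c := by
  linarith [two_mul_tri (m * 5 + c), two_mul_tri m, two_mul_tri c]

/-- The series `∑ sⁿ Q^(n(n-1)/2 + kn) / (1 - Q^(5n))`. Its term `n = 0` is zero, by division by
zero. -/
noncomputable def lambertSeries (Q s : ℂ) (k : ℤ) : ℂ :=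
  ∑' n : ℤ, Q ^ tri n * (s * Q ^ k) ^ n / (1 - Q ^ (5 * n))

lemma tri_two_mul (i : ℤ) : tri (2 * i) = i * (2 * i - 1) := by
  linarith [two_mul_tri (2 * i)]

section FiveDissection

variable {Q : ℂ} (hQ : Q ≠ 0)

include hQ

lemma tsum_zpow_tri_residue (c : ℤ) :
    ∑' m : ℤ, Q ^ tri (m * 5 + c) = Q ^ tri c * thetaAt (Q ^ 5) (-1) (2 + c) := by
  rw [thetaAt, theta, ← tsum_mul_left]
  refine tsum_congr fun m => ?_
  have hpow : Q ^ tri (m * 5 + c) =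
      Q ^ tri c * (((Q ^ 5) ^ 5) ^ tri m * ((Q ^ 5) ^ (2 + c)) ^ m) := by
    rw [tri_mul_five_add]
    simp only [← zpow_natCast, ← zpow_mul, ← zpow_add₀ hQ]
    congr 1
    push_cast
    ring
  rw [hpow, ← thetaCoeff_mul_neg_one_zpow ((Q ^ 5) ^ 5), mul_zpow (-1)]
  ring

lemma psi_five_dissection (hQ1 : ‖Q‖ < 1) :
    psi Q = thetaAt (Q ^ 5) (-1) 2 + Q * thetaAt (Q ^ 5) (-1) 1 + Q ^ 3 * psi ((Q ^ 5) ^ 5) := by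
  have hY : Q ^ 5 ≠ 0 := pow_ne_zero 5 hQ
  have h := tsum_zpow_tri hQ hQ1
  rw [tsum_int_eq_sum_tsum (summable_zpow_tri hQ hQ1) 5 (-2), Fin.sum_univ_five] at h
  simp only [add_assoc, Nat.cast_ofNat, tsum_zpow_tri_residue hQ] at h
  norm_num [tri, thetaAt_values hY neg_one_sq,
    thetaAt_neg_one_zero hY (norm_pow_five_lt_one hQ1)] at h
  linear_combination -h / 2

lemma summable_lambertSeries (hQ1 : ‖Q‖ < 1) {s : ℂ} (hs : s ≠ 0) (k : ℤ) :
    Summable fun n : ℤ => Q ^ tri n * (s * Q ^ k) ^ n / (1 - Q ^ (5 * n)) := by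
  have hx : s * Q ^ k ≠ 0 := mul_ne_zero hs (zpow_ne_zero k hQ)
  obtain ⟨C, hC⟩ := exists_norm_inv_one_sub_mul_zpow_le (pow_ne_zero 5 hQ)
    (norm_pow_five_lt_one hQ1) one_ne_zero
  simp only [one_mul] at hC
  refine .of_norm_bounded ((summable_norm_thetaCoeff_mul_zpow hQ hQ1 hx).mul_right C) fun n => ?_
  rw [div_eq_mul_inv, norm_mul, zpow_mul]
  exact mul_le_mul (by simp [thetaCoeff]) (hC n) (norm_nonneg _) (norm_nonneg _)

lemma tsum_lambertSeries_residue {s : ℂ} (hs : s ^ 2 = 1) (k c : ℤ) :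
    ∑' m : ℤ, Q ^ tri (m * 5 + c) * (s * Q ^ k) ^ (m * 5 + c) / (1 - Q ^ (5 * (m * 5 + c)))
      = Q ^ (tri c + k * c) * s ^ c * appellAt (Q ^ 5) (-s) (k + c - 3) c := by
  rw [appellAt, appell, ← tsum_mul_left]
  refine tsum_congr fun m => ?_
  have hs0 : s ≠ 0 := by
    rintro rfl
    norm_num at hs
  have hsign : s ^ (m * 5 + c) = s ^ c * s ^ m := by
    have hs4 : s ^ (4 : ℤ) = 1 := by
      norm_cast
      linear_combination (s ^ 2 + 1) * hs
    rw [show m * 5 + c = 4 * m + (c + m) by ring, zpow_add₀ hs0, zpow_mul, hs4, one_zpow, one_mul,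
      zpow_add₀ hs0]
  have hnum : Q ^ tri (m * 5 + c) * (Q ^ k) ^ (m * 5 + c) = Q ^ (tri c + k * c) *
      (((Q ^ 5) ^ 5) ^ tri m * ((Q ^ 5) ^ 5) ^ m * ((Q ^ 5) ^ (k + c - 3)) ^ m) := by
    rw [tri_mul_five_add]
    simp only [← zpow_natCast, ← zpow_mul, ← zpow_add₀ hQ]
    congr 1
    push_cast
    ring
  have hden : Q ^ (5 * (m * 5 + c)) = (Q ^ 5) ^ c * ((Q ^ 5) ^ 5) ^ m := by
    simp only [← zpow_natCast, ← zpow_mul, ← zpow_add₀ hQ]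
    congr 1
    push_cast
    ring
  rw [appellCoeff, ← neg_one_mul s, mul_assoc (-1), mul_zpow (-1), mul_zpow s, mul_zpow s, hsign,
    hden, ← mul_assoc (_ / _), div_mul_eq_mul_div, mul_right_comm (thetaCoeff _ _),
    thetaCoeff_mul_neg_one_zpow]
  linear_combination s ^ c * s ^ m / (1 - (Q ^ 5) ^ c * ((Q ^ 5) ^ 5) ^ m) * hnum

lemma lambertSeries_five_dissection (hQ1 : ‖Q‖ < 1) {s : ℂ} (hs : s ^ 2 = 1) (k : ℤ) :
    lambertSeries Q s k = ∑ j : Fin 5, Q ^ (tri (j - 2) + k * (j - 2)) * s ^ (j - 2 : ℤ) *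
      appellAt (Q ^ 5) (-s) (k + (j - 2) - 3) (j - 2) := by
  have hs0 : s ≠ 0 := by
    rintro rfl
    norm_num at hs
  rw [lambertSeries, tsum_int_eq_sum_tsum (summable_lambertSeries hQ hQ1 hs0 k) 5 (-2)]
  simp only [add_assoc, Nat.cast_ofNat, tsum_lambertSeries_residue hQ hs, Int.sub_eq_add_neg]

lemma summable_lambertSeries_even (hQ1 : ‖Q‖ < 1) (k : ℤ) :
    Summable fun i : ℤ => Q ^ (i * (2 * i - 1)) * Q ^ (2 * k * i) / (1 - Q ^ (10 * i)) := by
  refine ((summable_lambertSeries hQ hQ1 one_ne_zero k).comp_injective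
    (mul_right_injective₀ (two_ne_zero (α := ℤ)))).congr fun i => ?_
  simp only [Function.comp, tri_two_mul, one_mul, ← zpow_mul]
  ring_nf

lemma lambertSeries_one_add_neg_one (hQ1 : ‖Q‖ < 1) (k : ℤ) :
    lambertSeries Q 1 k + lambertSeries Q (-1) k =
      2 * ∑' i : ℤ, Q ^ (i * (2 * i - 1)) * Q ^ (2 * k * i) / (1 - Q ^ (10 * i)) := by
  have h₁ := summable_lambertSeries hQ hQ1 one_ne_zero k
  have h₂ := summable_lambertSeries hQ hQ1 (neg_ne_zero.2 one_ne_zero) k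
  have hodd (m : ℤ) : (-1 * Q ^ k) ^ (2 * m + 1) = -(Q ^ k) ^ (2 * m + 1) := by
    rw [neg_one_mul, Odd.neg_zpow ⟨m, rfl⟩]
  have heven (m : ℤ) : (-1 * Q ^ k) ^ (2 * m) = (Q ^ k) ^ (2 * m) := by
    rw [neg_one_mul, (even_two_mul m).neg_zpow]
  rw [lambertSeries, lambertSeries, ← h₁.tsum_add h₂, tsum_int_eq_sum_tsum (h₁.add h₂) 2 0,
    Fin.sum_univ_two, ← tsum_mul_left]
  simp only [mul_comm _ (2 : ℤ), Fin.val_zero, Fin.val_one, Nat.cast_ofNat, Nat.cast_zero,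
    Nat.cast_one, add_zero, hodd, heven, one_mul, mul_neg, neg_div,
    add_neg_cancel, tsum_zero, ← two_mul, tri_two_mul, ← zpow_mul]
  refine tsum_congr fun i => ?_
  ring_nf

lemma rankDiffLambert_eq_lambertSeries (hQ1 : ‖Q‖ < 1) :
    rankDiffLambert Q = 1 + (lambertSeries Q 1 1 + lambertSeries Q (-1) 1)
      + (lambertSeries Q 1 2 + lambertSeries Q (-1) 2) / 2 := by
  rw [lambertSeries_one_add_neg_one hQ hQ1, lambertSeries_one_add_neg_one hQ hQ1,
    mul_div_cancel_left₀ _ two_ne_zero, ← tsum_mul_left, add_assoc,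
    ← ((summable_lambertSeries_even hQ hQ1 1).mul_left 2).tsum_add
      (summable_lambertSeries_even hQ hQ1 2), rankDiffLambert]
  congr 1
  refine tsum_congr fun i => ?_
  ring_nf

theorem rankDiffLambert_five_dissection (hQ1 : ‖Q‖ < 1 / 2) :
    rankDiffLambert Q = psi Q * ∑ k : Fin 5, Q ^ (k : ℕ) * rankDiffPart (Q ^ 5) k := by
  have hQ1' : ‖Q‖ < 1 := hQ1.trans (by norm_num)
  have hY : Q ^ 5 ≠ 0 := pow_ne_zero 5 hQ
  have hY1 : ‖Q ^ 5‖ < 1 / 2 := by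
    rw [norm_pow]
    exact (pow_le_of_le_one (norm_nonneg _) hQ1'.le (by norm_num)).trans_lt hQ1
  have hinv : Q ^ (-1 : ℤ) = Q ^ 4 / Q ^ 5 := by
    rw [zpow_neg_one]
    field_simp
  have h₃ : rankDiffPart (Q ^ 5) 3 = 0 := rfl
  rw [rankDiffLambert_eq_lambertSeries hQ hQ1', psi_five_dissection hQ hQ1']
  simp only [lambertSeries_five_dissection hQ hQ1' (one_pow 2),
    lambertSeries_five_dissection hQ hQ1' neg_one_sq, Fin.sum_univ_five, h₃]
  norm_num [tri, hinv]
  linear_combination (norm := (field_simp; ring)) appellAt_component_zero hY hY1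
    + Q * appellAt_component_one hY hY1 + Q ^ 2 * appellAt_component_two hY hY1
    + Q ^ 3 * appellAt_component_three hY hY1 + Q ^ 4 * appellAt_component_four hY hY1

end FiveDissection

/-! ### Rank classes -/

section RankSum

variable {c : ℤ → ℂ} {C : ℝ} (hc : ∀ m, ‖c m‖ ≤ C)
include hc

lemma hasSum_weightedSum_rank {q : ℂ} (hq1 : ‖q‖ < 1 / 2) :
    HasSum (fun m : ℤ => c m * (rankTail q m - rankTail q (m + 1)))
      (weightedSum q fun s => c (rank s)) := by
  have h := (summable_mul_weight hq1 fun s => hc (rank s)).hasSum.tsum_fiberwise rank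
  refine h.congr_fun fun m => ?_
  rw [tsum_subtype (rank ⁻¹' {m}) (fun s => c (rank s) * weight q s), rankTail, rankTail,
    ← weightedSum_sub hq1 (C := 1) (D := 1) (fun _ => norm_ite_one_zero_le _)
      (fun _ => norm_ite_one_zero_le _), weightedSum, ← tsum_mul_left]
  refine tsum_congr fun s => ?_
  rcases lt_trichotomy (rank s) m with h | h | h
  · simp [h.ne, show ¬ m ≤ rank s by omega, show ¬ m + 1 ≤ rank s by omega]
  · simp [h]
  · simp [h.ne', h.le, show m + 1 ≤ rank s by omega]

variable {Q : ℂ} (hQ1 : ‖Q‖ < 1 / 2) (hQ : Q ≠ 0)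
include hQ1 hQ

/- The ranks `n + 1` and `-(n + 1)` are combined; the subtracted term is the contribution of
rank `0`. -/
lemma hasSum_psi_mul_weightedSum :
    HasSum (fun n : ℕ => (c (n + 1) + c (-(n + 1))) *
        (partialTheta Q (n + 2) - partialTheta Q (n + 1)))
      (psi Q * weightedSum (-Q) (fun s => c (rank s)) - c 0 * (1 + 2 * partialTheta Q 1)) := by
  have hQ1' : ‖-Q‖ < 1 / 2 := by rwa [norm_neg]
  have hP := partitionSeries_neg_mul_psi hQ1 hQ
  have htail (r : ℕ) : rankTail (-Q) (r + 1) = -partitionSeries (-Q) * partialTheta Q (r + 1) :=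
    mod_cast rankTail_neg_eq hQ1 hQ (Nat.le_add_left 1 r)
  have hsymm (r : ℕ) : rankTail (-Q) (-r) = partitionSeries (-Q) - rankTail (-Q) (r + 1) := by
    rw [← rankTail_add_rankTail_one_sub (neg_ne_zero.2 hQ) hQ1' (Nat.le_add_left 1 r)]
    push_cast
    ring_nf
  have h := ((hasSum_nat_add_iff' 1).2
    (hasSum_weightedSum_rank hc hQ1').nat_add_neg).mul_left (psi Q)
  have hzero : psi Q * (rankTail (-Q) 0 - rankTail (-Q) 1) = 1 + 2 * partialTheta Q 1 := by
    have h₁ := htail 0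
    simp only [CharP.cast_eq_zero, zero_add] at h₁
    rw [rankTail_neg_zero hQ1 hQ, h₁]
    linear_combination (partialTheta Q 1 - partialTheta Q 0) * hP + psi_eq_partialTheta hQ1
  simp only [Finset.sum_range_one, Nat.cast_zero, neg_zero, zero_add] at h
  rw [add_sub_add_right_eq_sub, mul_sub, mul_left_comm, hzero] at h
  refine h.congr_fun fun n => ?_
  rw [show -((n + 1 : ℕ) : ℤ) + 1 = -n by push_cast; ring, hsymm, hsymm, htail, Nat.cast_add_one,
    htail]
  linear_combination (c (n + 1) + c (-(n + 1))) *
    (partialTheta Q (n + 1) - partialTheta Q (n + 2)) * hP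

end RankSum

section Interchange

variable {Q : ℂ} (hQ1 : ‖Q‖ < 1 / 2) {b : ℕ → ℂ} {C : ℝ} (hb : ∀ n, ‖b n‖ ≤ C)
include hQ1 hb

lemma summable_mul_partialTheta_term (r : ℕ) : Summable fun x : ℕ × ℕ =>
    b x.1 * Q ^ ((x.2 + 1) * (2 * x.2 + 1 + 2 * (x.1 + r))) := by
  have hgeom : Summable fun n : ℕ => ‖Q‖ ^ n :=
    summable_geometric_of_lt_one (norm_nonneg Q) (by linarith)
  refine .of_norm_bounded ((hgeom.mul_of_nonneg hgeom (fun _ => by positivity)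
    (fun _ => by positivity)).mul_left C) fun x => ?_
  rw [norm_mul]
  refine mul_le_mul (hb _) ((norm_partialTheta_term_le hQ1 _ _).trans ?_) (norm_nonneg _)
    ((norm_nonneg _).trans (hb 0))
  gcongr ?_ * _
  exact pow_le_pow_of_le_one (norm_nonneg Q) (by linarith) (Nat.le_add_right _ _)

lemma summable_mul_partialTheta (r : ℕ) : Summable fun n => b n * partialTheta Q (n + r) := by
  simpa only [partialTheta, ← tsum_mul_left] using (summable_mul_partialTheta_term hQ1 hb r).prod

/- The double series over `n` and the index of the theta series is summed over `n` first. -/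
lemma hasSum_tsum_mul_partialTheta (r : ℕ) :
    HasSum (fun k : ℕ => Q ^ ((k + 1) * (2 * k + 1 + 2 * r)) * ∑' n, b n * (Q ^ (2 * (k + 1))) ^ n)
      (∑' n, b n * partialTheta Q (n + r)) := by
  have h := summable_mul_partialTheta_term hQ1 hb r
  have hinner (k : ℕ) : Q ^ ((k + 1) * (2 * k + 1 + 2 * r)) * ∑' n, b n * (Q ^ (2 * (k + 1))) ^ n =
      ∑' n, b n * Q ^ ((k + 1) * (2 * k + 1 + 2 * (n + r))) := by
    rw [← tsum_mul_left]
    refine tsum_congr fun n => ?_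
    ring
  simp only [partialTheta, ← tsum_mul_left (a := b _), hinner]
  rw [← Summable.tsum_comm (f := fun n k => b n * Q ^ ((k + 1) * (2 * k + 1 + 2 * (n + r)))) h]
  exact h.prod_symm.prod.hasSum

end Interchange

theorem hasSum_psi_mul_weightedSum_rank {c : ℤ → ℂ} {C : ℝ} (hc : ∀ m, ‖c m‖ ≤ C) {Q : ℂ}
    (hQ1 : ‖Q‖ < 1 / 2) (hQ : Q ≠ 0) :
    HasSum (fun k : ℕ => Q ^ ((k + 1) * (2 * k + 3)) * (2 * c 0 + (Q ^ (2 * (k + 1)) - 1) *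
        ∑' n : ℕ, (c (n + 1) + c (-(n + 1))) * (Q ^ (2 * (k + 1))) ^ n))
      (psi Q * weightedSum (-Q) (fun s => c (rank s)) - c 0) := by
  have hb (n : ℕ) : ‖c (n + 1) + c (-(n + 1))‖ ≤ C + C :=
    (norm_add_le _ _).trans (add_le_add (hc _) (hc _))
  have hsum := (hasSum_psi_mul_weightedSum hc hQ1 hQ).tsum_eq
  simp only [mul_sub] at hsum
  rw [(summable_mul_partialTheta hQ1 hb 2).tsum_sub (summable_mul_partialTheta hQ1 hb 1)] at hsum
  have h := ((summable_partialTheta hQ1 1).hasSum.mul_left (2 * c 0)).add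
    ((hasSum_tsum_mul_partialTheta hQ1 hb 2).sub (hasSum_tsum_mul_partialTheta hQ1 hb 1))
  rw [hsum, ← partialTheta] at h
  rw [show ∀ x, 2 * c 0 * partialTheta Q 1 + (x - c 0 * (1 + 2 * partialTheta Q 1)) = x - c 0 by
    intro x; ring] at h
  refine h.congr_fun fun k => ?_
  generalize ∑' n : ℕ, (c (n + 1) + c (-(n + 1))) * (Q ^ (2 * (k + 1))) ^ n = S
  ring

lemma tsum_mul_pow_of_periodic {a : ℕ → ℂ} {N : ℕ} (ha : Function.Periodic a N) (hN : N ≠ 0)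
    {x : ℂ} (hx : ‖x‖ < 1) :
    ∑' n, a n * x ^ n = (∑ n ∈ Finset.range N, a n * x ^ n) / (1 - x ^ N) := by
  have hbound (n : ℕ) : ‖a n‖ ≤ ∑ i ∈ Finset.range N, ‖a i‖ := by
    rw [← ha.map_mod_nat n]
    exact Finset.single_le_sum (f := fun i => ‖a i‖) (fun _ _ => norm_nonneg _)
      (Finset.mem_range.2 (Nat.mod_lt n (Nat.pos_of_ne_zero hN)))
  have hsum : Summable fun n => a n * x ^ n := by
    refine .of_norm_bounded ((summable_geometric_of_lt_one (norm_nonneg x) hx).mul_left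
      (∑ i ∈ Finset.range N, ‖a i‖)) fun n => ?_
    rw [norm_mul, norm_pow]
    exact mul_le_mul_of_nonneg_right (hbound n) (by positivity)
  have hxN : 1 - x ^ N ≠ 0 := by
    refine sub_ne_zero.2 fun h => ?_
    have := zpow_ne_one hx (n := N) (mod_cast hN)
    exact this (mod_cast h.symm)
  have hshift : ∑' n, a (n + N) * x ^ (n + N) = (∑' n, a n * x ^ n) * x ^ N := by
    rw [← tsum_mul_right]
    refine tsum_congr fun n => ?_
    rw [ha, pow_add, mul_assoc]
  have hsplit := hsum.sum_add_tsum_nat_add N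
  rw [hshift] at hsplit
  rw [eq_div_iff hxN]
  linear_combination -hsplit

/-- The class function of the rank whose sum over partitions is the difference
`N₂(0,5,n) - N₂(2,5,n)`. -/
noncomputable def rankClassDiff (m : ℤ) : ℂ :=
  (if m ≡ 0 [ZMOD 5] then 1 else 0) - if m ≡ 2 [ZMOD 5] then 1 else 0

lemma norm_rankClassDiff_le (m : ℤ) : ‖rankClassDiff m‖ ≤ 1 + 1 :=
  (norm_sub_le _ _).trans (add_le_add (norm_ite_one_zero_le _) (norm_ite_one_zero_le _))

lemma periodic_rankClassDiff : Function.Periodic rankClassDiff 5 := fun m => by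
  have hshift (s : ℤ) : m + 5 ≡ s [ZMOD 5] ↔ m ≡ s [ZMOD 5] := by simp [Int.ModEq]
  simp only [rankClassDiff, hshift]

lemma tsum_rankClassDiff_mul_pow {x : ℂ} (hx : ‖x‖ < 1) :
    ∑' n : ℕ, (rankClassDiff (n + 1) + rankClassDiff (-(n + 1))) * x ^ n =
      (2 * x ^ 4 - x - x ^ 2) / (1 - x ^ 5) := by
  have hper : Function.Periodic
      (fun n : ℕ => rankClassDiff (n + 1) + rankClassDiff (-(n + 1))) 5 := fun n => by
    have hpos := periodic_rankClassDiff (n + 1)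
    have hneg := periodic_rankClassDiff.sub_eq (-(n + 1))
    push_cast
    rw [← hpos, ← hneg]
    ring_nf
  rw [tsum_mul_pow_of_periodic hper (by norm_num) hx]
  norm_num [Finset.sum_range_succ, rankClassDiff, Int.ModEq]
  ring

lemma lambert_term_add_term_neg {Q : ℂ} (hQ : Q ≠ 0) (hQ1 : ‖Q‖ < 1) {i : ℤ} (hi : i ≠ 0) :
    Q ^ (i * (2 * i - 1)) * (2 * Q ^ (2 * i) + Q ^ (4 * i)) / (1 - Q ^ (10 * i)) +
      Q ^ (-i * (2 * -i - 1)) * (2 * Q ^ (2 * -i) + Q ^ (4 * -i)) / (1 - Q ^ (10 * -i)) =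
    Q ^ (i * (2 * i + 1)) * ((2 + Q ^ (2 * i) - (Q ^ (2 * i)) ^ 3 - 2 * (Q ^ (2 * i)) ^ 4)
      / (1 - (Q ^ (2 * i)) ^ 5)) := by
  have hpow (m : ℕ) : Q ^ (2 * i * m) = (Q ^ (2 * i)) ^ m := by rw [zpow_mul, zpow_natCast]
  have hX5 : 1 - (Q ^ (2 * i)) ^ 5 ≠ 0 := by
    rw [← hpow]
    exact sub_ne_zero.2 (zpow_ne_one hQ1 (by push_cast; omega)).symm
  have hX0 : Q ^ (2 * i) ≠ 0 := zpow_ne_zero _ hQ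
  have hinv : 1 - ((Q ^ (2 * i)) ^ 5)⁻¹ = -(1 - (Q ^ (2 * i)) ^ 5) / (Q ^ (2 * i)) ^ 5 := by
    field_simp
    ring
  rw [show i * (2 * i + 1) = i * (2 * i - 1) + 2 * i by ring, zpow_add₀ hQ,
    show -i * (2 * -i - 1) = i * (2 * i - 1) + 2 * i by ring, zpow_add₀ hQ,
    show 2 * -i = -(2 * i) by ring, show 4 * -i = -(2 * i * (2 : ℕ)) by push_cast; ring,
    show 4 * i = 2 * i * (2 : ℕ) by push_cast; ring,
    show 10 * -i = -(2 * i * (5 : ℕ)) by push_cast; ring,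
    show 10 * i = 2 * i * (5 : ℕ) by push_cast; ring]
  simp only [zpow_neg, hpow]
  rw [hinv]
  generalize Q ^ (2 * i) = X at *
  field_simp
  ring

lemma rankDiffLambert_eq_tsum_nat {Q : ℂ} (hQ : Q ≠ 0) (hQ1 : ‖Q‖ < 1) :
    rankDiffLambert Q = 1 + ∑' k : ℕ, Q ^ ((k + 1) * (2 * k + 3)) *
      ((2 + Q ^ (2 * (k + 1)) - (Q ^ (2 * (k + 1))) ^ 3 - 2 * (Q ^ (2 * (k + 1))) ^ 4)
        / (1 - (Q ^ (2 * (k + 1))) ^ 5)) := by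
  set f : ℤ → ℂ := fun i => Q ^ (i * (2 * i - 1)) * (2 * Q ^ (2 * i) + Q ^ (4 * i))
    / (1 - Q ^ (10 * i)) with hf
  have hsum : Summable f := by
    refine (((summable_lambertSeries_even hQ hQ1 1).mul_left 2).add
      (summable_lambertSeries_even hQ hQ1 2)).congr fun i => ?_
    rw [hf]
    ring_nf
  have hpos : Summable fun k : ℕ => f ((k : ℤ) + 1) :=
    hsum.comp_injective (i := fun k : ℕ => (k : ℤ) + 1) fun a b h => by simpa using h
  have hneg : Summable fun k : ℕ => f (-((k : ℤ) + 1)) :=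
    hsum.comp_injective (i := fun k : ℕ => -((k : ℤ) + 1)) fun a b h => by simpa using h
  have hzero : f 0 = 0 := by simp [hf]
  rw [rankDiffLambert, ← hf, tsum_of_add_one_of_neg_add_one hpos hneg, hzero, add_zero,
    ← hpos.tsum_add hneg]
  congr 1
  refine tsum_congr fun k => ?_
  simp only [hf]
  rw [lambert_term_add_term_neg hQ hQ1 (by omega)]
  have hquad : ((k : ℤ) + 1) * (2 * (k + 1) + 1) = ((k + 1) * (2 * k + 3) : ℕ) := by
    push_cast
    ring
  have hlin : 2 * ((k : ℤ) + 1) = (2 * (k + 1) : ℕ) := by push_cast; ring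
  rw [hquad]
  simp only [hlin, zpow_natCast]

theorem psi_mul_weightedSum_rankClassDiff {Q : ℂ} (hQ1 : ‖Q‖ < 1 / 2) (hQ : Q ≠ 0) :
    psi Q * weightedSum (-Q) (fun s => rankClassDiff (rank s)) = rankDiffLambert Q := by
  have hQ1' : ‖Q‖ < 1 := hQ1.trans (by norm_num)
  have h := (hasSum_psi_mul_weightedSum_rank norm_rankClassDiff_le hQ1 hQ).tsum_eq
  have hzero : rankClassDiff 0 = 1 := by norm_num [rankClassDiff, Int.ModEq]
  rw [hzero, eq_sub_iff_add_eq'] at h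
  rw [← h, rankDiffLambert_eq_tsum_nat hQ hQ1']
  congr 1
  refine tsum_congr fun k => ?_
  have hX : ‖Q ^ (2 * (k + 1))‖ < 1 := by
    rw [norm_pow]
    exact pow_lt_one₀ (norm_nonneg Q) hQ1' (by omega)
  have hX5 : 1 - (Q ^ (2 * (k + 1))) ^ 5 ≠ 0 :=
    sub_ne_zero.2 (mod_cast (zpow_ne_one hX (n := 5) (by norm_num)).symm)
  rw [tsum_rankClassDiff_mul_pow hX]
  field_simp
  ring

/-! ### Coefficient extraction -/

lemma hasSum_N2_mul_pow {q : ℂ} (hq1 : ‖q‖ < 1 / 2) (s ℓ : ℕ) :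
    HasSum (fun n => (N2 s ℓ n : ℂ) * q ^ n)
      (weightedSum q fun t => if rank t ≡ s [ZMOD ℓ] then 1 else 0) := by
  have hsum := (summable_mul_weight hq1 (C := 1)
    (c := fun t => if rank t ≡ s [ZMOD ℓ] then 1 else 0) fun _ => norm_ite_one_zero_le _).hasSum
  have hinj : Function.Injective fun x => (sigmaPartitionEquiv x : Multiset ℕ) :=
    Subtype.val_injective.comp sigmaPartitionEquiv.injective
  rw [← hinj.hasSum_iff] at hsum
  · refine hsum.sigma fun n => ?_
    have hcoeff : (N2 s ℓ n : ℂ) * q ^ n = ∑ p : n.Partition,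
        (if rank p.parts ≡ s [ZMOD ℓ] then 1 else 0) * weight q p.parts := by
      classical
      rw [N2, Nat.card_eq_fintype_card, Fintype.card_subtype, ← Finset.sum_boole, Finset.sum_mul]
      refine Finset.sum_congr rfl fun p _ => ?_
      have hmem : p.parts ∈ oddDistinctPartitions ↔ p.noRepeatedOdd :=
        ⟨fun h => h.2, fun h => ⟨fun h0 => lt_irrefl 0 (p.parts_pos h0), h⟩⟩
      have hrank : p.m2Rank = rank p.parts := rfl
      rw [weight, Set.indicator_apply, p.parts_sum, hrank]
      by_cases hp : p.noRepeatedOdd <;> simp [hp, hmem]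
    rw [hcoeff]
    exact hasSum_fintype _
  · intro t ht
    have hmem : t ∉ oddDistinctPartitions :=
      fun h => ht ⟨sigmaPartitionEquiv.symm ⟨t, h.1⟩, by simp⟩
    simp [weight, hmem]

lemma hasSum_N2_sub_N2_mul_pow {q : ℂ} (hq1 : ‖q‖ < 1 / 2) :
    HasSum (fun n => ((N2 0 5 n : ℂ) - N2 2 5 n) * q ^ n)
      (weightedSum q fun s => rankClassDiff (rank s)) := by
  have h := (hasSum_N2_mul_pow hq1 0 5).sub (hasSum_N2_mul_pow hq1 2 5)
  rw [← weightedSum_sub hq1 (fun _ => norm_ite_one_zero_le _)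
    (fun _ => norm_ite_one_zero_le _)] at h
  exact h.congr_fun fun n => sub_mul _ _ _

/- The series is multiplied by `z`, so that it also sums to `0` at `z = 0`. -/
lemma eq_zero_of_hasSum_pow {a : ℕ → ℂ} {r : ℝ} (hr : 0 < r)
    (h : ∀ z, z ≠ 0 → ‖z‖ < r → HasSum (fun n => a n * z ^ n) 0) (n : ℕ) : a n = 0 := by
  let c : ℕ → ℂ := fun n => n.casesOn 0 a
  have hc : HasFPowerSeriesAt (0 : ℂ → ℂ) (FormalMultilinearSeries.ofScalars ℂ c) 0 := by
    rw [hasFPowerSeriesAt_iff]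
    filter_upwards [Metric.ball_mem_nhds (0 : ℂ) hr] with z hz
    simp only [FormalMultilinearSeries.coeff_ofScalars, smul_eq_mul, Pi.zero_apply]
    rcases eq_or_ne z 0 with rfl | hz0
    · refine hasSum_zero.congr_fun fun n => ?_
      rcases n with _ | n <;> simp [c]
    · have hz' := (h z hz0 (by simpa using hz)).mul_left z
      rw [mul_zero] at hz'
      rw [← hasSum_nat_add_iff' 1, Finset.sum_range_one, show z ^ 0 * c 0 = 0 from mul_zero _,
        sub_zero]
      exact hz'.congr_fun fun n => show z ^ (n + 1) * a n = z * (a n * z ^ n) by ring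
  have hcoeff := FormalMultilinearSeries.coeff_ofScalars (𝕜 := ℂ) (p := c) (n := n + 1)
  rw [hc.eq_zero] at hcoeff
  exact hcoeff.symm

lemma sum_pow_div_pow {N : ℕ} (hN : N ≠ 0) {ζ : ℂ} (hζ : IsPrimitiveRoot ζ N) (n j : ℕ) :
    ∑ i ∈ Finset.range N, (ζ ^ n / ζ ^ j) ^ i = if n ≡ j [MOD N] then (N : ℂ) else 0 := by
  have hζj : ζ ^ j ≠ 0 := pow_ne_zero _ (hζ.ne_zero hN)
  have hiff : ζ ^ n / ζ ^ j = 1 ↔ n ≡ j [MOD N] := by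
    rw [div_eq_one_iff_eq hζj, (hζ.isOfFinOrder hN).pow_eq_pow_iff_modEq, ← hζ.eq_orderOf]
  split_ifs with h
  · simp [hiff.2 h]
  · rw [geom_sum_eq (mt hiff.1 h), div_pow, ← pow_mul, ← pow_mul, mul_comm n, mul_comm j, pow_mul,
      pow_mul, hζ.pow_eq_one]
    simp

lemma hasSum_dissection_component {N : ℕ} [NeZero N] {a : ℕ → ℂ} {E : ℂ → Fin N → ℂ} {r : ℝ}
    (h : ∀ z, z ≠ 0 → ‖z‖ < r →
      HasSum (fun n => a n * z ^ n) (∑ k : Fin N, z ^ (k : ℕ) * E (z ^ N) k))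
    (j : Fin N) {z : ℂ} (hz : z ≠ 0) (hzr : ‖z‖ < r) :
    HasSum (fun n => (if n ≡ j [MOD N] then (N : ℂ) * a n else 0) * z ^ n)
      (N * (z ^ (j : ℕ) * E (z ^ N) j)) := by
  have hN : N ≠ 0 := NeZero.ne N
  obtain ⟨ζ, hζ⟩ : ∃ ζ : ℂ, IsPrimitiveRoot ζ N := ⟨_, Complex.isPrimitiveRoot_exp N hN⟩
  have hζ1 : ‖ζ‖ = 1 := Complex.norm_eq_one_of_pow_eq_one hζ.pow_eq_one hN
  have hrotate (n i : ℕ) : (1 / ζ ^ (j : ℕ)) ^ i * (ζ ^ i * z) ^ n =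
      z ^ n * (ζ ^ n / ζ ^ (j : ℕ)) ^ i := by
    rw [mul_pow, ← pow_mul, mul_comm i, pow_mul, div_pow, div_pow, one_pow]
    ring
  have hpowN (i : ℕ) : (ζ ^ i * z) ^ N = z ^ N := by
    rw [mul_pow, ← pow_mul, mul_comm i, pow_mul, hζ.pow_eq_one, one_pow, one_mul]
  have hsum := hasSum_sum (s := Finset.range N) fun i _ =>
    (h (ζ ^ i * z) (mul_ne_zero (pow_ne_zero i (hζ.ne_zero hN)) hz)
      (by simpa [hζ1] using hzr)).mul_left ((1 / ζ ^ (j : ℕ)) ^ i)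
  have hvalue : ∑ i ∈ Finset.range N, (1 / ζ ^ (j : ℕ)) ^ i *
      ∑ k : Fin N, (ζ ^ i * z) ^ (k : ℕ) * E ((ζ ^ i * z) ^ N) k =
      N * (z ^ (j : ℕ) * E (z ^ N) j) := by
    have hmod (k : Fin N) : (k : ℕ) ≡ j [MOD N] ↔ k = j := by
      rw [Nat.ModEq, Nat.mod_eq_of_lt k.2, Nat.mod_eq_of_lt j.2, Fin.val_inj]
    simp only [Finset.mul_sum, ← mul_assoc, hrotate, hpowN]
    rw [Finset.sum_comm]
    simp only [← Finset.sum_mul, ← Finset.mul_sum, sum_pow_div_pow hN hζ, hmod]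
    simp [mul_comm]
  rw [hvalue] at hsum
  refine hsum.congr_fun fun n => ?_
  simp only [mul_left_comm _ (a n), hrotate, ← Finset.mul_sum, sum_pow_div_pow hN hζ]
  split_ifs <;> ring

theorem coeff_eq_zero_of_dissection {N : ℕ} [NeZero N] {a : ℕ → ℂ} {E : ℂ → Fin N → ℂ} {r : ℝ}
    (hr : 0 < r) (h : ∀ z, z ≠ 0 → ‖z‖ < r →
      HasSum (fun n => a n * z ^ n) (∑ k : Fin N, z ^ (k : ℕ) * E (z ^ N) k))
    {j : Fin N} (hE : ∀ y, E y j = 0) {n : ℕ} (hn : n ≡ j [MOD N]) : a n = 0 := by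
  have hzero := eq_zero_of_hasSum_pow hr (fun z hz hzr => by
    simpa only [hE, mul_zero] using hasSum_dissection_component h j hz hzr) n
  simpa [hn, NeZero.ne N] using hzero

lemma hasSum_N2_sub_N2_five_dissection {Q : ℂ} (hQ : Q ≠ 0) (hQ1 : ‖Q‖ < 1 / 2) :
    HasSum (fun n => ((N2 0 5 n : ℂ) - N2 2 5 n) * (-1) ^ n * Q ^ n)
      (∑ k : Fin 5, Q ^ (k : ℕ) * rankDiffPart (Q ^ 5) k) := by
  have hvalue : weightedSum (-Q) (fun s => rankClassDiff (rank s)) =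
      ∑ k : Fin 5, Q ^ (k : ℕ) * rankDiffPart (Q ^ 5) k :=
    mul_left_cancel₀ (psi_ne_zero hQ1 hQ) <|
      (psi_mul_weightedSum_rankClassDiff hQ1 hQ).trans (rankDiffLambert_five_dissection hQ hQ1)
  rw [← hvalue]
  refine (hasSum_N2_sub_N2_mul_pow (by rwa [norm_neg])).congr_fun fun n => ?_
  rw [neg_pow Q, mul_assoc]

end M2Rank

theorem M2_rank_diff_mod5_02_d3 (n : ℕ) : N2 0 5 (5 * n + 3) = N2 2 5 (5 * n + 3) := by
  have hcoeff : ((N2 0 5 (5 * n + 3) : ℂ) - N2 2 5 (5 * n + 3)) * (-1) ^ (5 * n + 3) = 0 :=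
    M2Rank.coeff_eq_zero_of_dissection (j := 3) (by norm_num)
      (fun _ => M2Rank.hasSum_N2_sub_N2_five_dissection)
      (fun y => show M2Rank.rankDiffPart y 3 = 0 from rfl) (by simp [Nat.ModEq])
  have hdiff := (mul_eq_zero.1 hcoeff).resolve_right (by simp)
  exact_mod_cast sub_eq_zero.1 hdiff
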